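/- arXiv:1105.2532 — 3 statements merged into one kernel-verified Lean document; each statement's English description precedes it below -/
import Mathlib

section
/- Every planar graph is 5-list colorable; that is, for every planar graph G and every list assignment L with |L(v)| = 5 for all vertices v of G, the graph G admits an L-coloring. -/
/-!
Planarity enters only through the excluded minors, so the outer face of Thomassen's induction is
replaced by a branch set. Vertices are deleted one at a time; `A` is a connected set of deleted
vertices, `U` the set of remaining ones, and the vertices of `U` with a neighbour in `A`, called
boundary vertices below, play the role of the outer cycle. The induction statement
(`exists_extension`) is: if a set `P` of pairwise adjacent boundary vertices is properly
precoloured, the other boundary vertices have at least three colours and the remaining vertices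
of `U` at least five, then the precolouring extends to `U`.

If some `x ∈ P` has no boundary neighbour outside `P`, move `x` to `A`, striking its colour from
the lists of its neighbours. Otherwise `x` has a boundary neighbour `v ∉ P`. If `v` has at most
one further boundary neighbour `w`, reserve two colours of `v` different from that of `x`, strike
them from the lists of the non-boundary neighbours of `v`, move `v` to `A`, and at the end
give `v` the reserved colour that `w` does not use. If `v` has three boundary neighbours
`p`, `q`, `r`, then for one of them, say `q`, the pair `v`, `q` separates `U`
(`exists_separation`): otherwise `p`, `q`, `r` would be joined pairwise by connected sets in `U`
avoiding `v` and the third vertex, and either two of these sets meet, giving a `K₃,₃`-minor with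
sides `A, v, T` and `p, q, r`, or they are disjoint and give a `K₅`-minor made of `A`, `v` and the
triangle through `p`, `q`, `r`. The clique `P` lies on one side of the separation; that side is
coloured first, and the other side is coloured with `v`, `q` precoloured.
-/

open SimpleGraph

/-- The degree of a vertex `v` in `G` (as the cardinality of its neighborhood). -/
noncomputable def vdeg {V : Type*} (G : SimpleGraph V) (v : V) : ℕ :=
  (G.neighborSet v).ncard

/-- `G` has an `H`-minor: there are nonempty, pairwise disjoint, connected branch sets
`B i` in `G`, one for each vertex `i` of `H`, such that whenever `i` and `j` are adjacent
in `H` there is an edge of `G` between `B i` and `B j`. -/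
def HasMinor {V W : Type*} (G : SimpleGraph V) (H : SimpleGraph W) : Prop :=
  ∃ B : W → Set V,
    (∀ i, (B i).Nonempty) ∧
    (∀ i, (G.induce (B i)).Connected) ∧
    (Pairwise fun i j => Disjoint (B i) (B j)) ∧
    (∀ i j, H.Adj i j → ∃ u ∈ B i, ∃ v ∈ B j, G.Adj u v)

/-- `G` has no `K₅`-minor. -/
def K5MinorFree {V : Type*} (G : SimpleGraph V) : Prop :=
  ¬ HasMinor G (completeGraph (Fin 5))

/-- Planarity, encoded via Wagner's theorem: no `K₅`-minor and no `K₃,₃`-minor. -/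
def IsPlanar {V : Type*} (G : SimpleGraph V) : Prop :=
  ¬ HasMinor G (completeGraph (Fin 5)) ∧
  ¬ HasMinor G (completeBipartiteGraph (Fin 3) (Fin 3))

/-- Outerplanarity, encoded via the forbidden-minor characterization:
no `K₄`-minor and no `K₂,₃`-minor. -/
def IsOuterplanar {V : Type*} (G : SimpleGraph V) : Prop :=
  ¬ HasMinor G (completeGraph (Fin 4)) ∧
  ¬ HasMinor G (completeBipartiteGraph (Fin 2) (Fin 3))

/-- `φ` is a proper coloring of `G` choosing each color from the list `L v`. -/
def IsListColoring {V : Type*} (G : SimpleGraph V) (L : V → Finset ℕ) (φ : V → ℕ) : Prop :=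
  (∀ v, φ v ∈ L v) ∧ ∀ u v, G.Adj u v → φ u ≠ φ v

/-- `G` is `k`-connected: more than `k` vertices, and deleting any set of fewer than `k`
vertices leaves a connected graph. -/
def KConnected {V : Type*} [Fintype V] (k : ℕ) (G : SimpleGraph V) : Prop :=
  k < Fintype.card V ∧ ∀ S : Set V, S.ncard < k → (G.induce (Sᶜ : Set V)).Connected

/-- The induced subgraph on `B` has no cut vertex. -/
def NoCutVertex {V : Type*} (G : SimpleGraph V) (B : Set V) : Prop :=
  ∀ v ∈ B, (B \ {v}).Nonempty → (G.induce (B \ {v})).Connected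

/-- `B` is (the vertex set of) a block of `G`: a maximal set inducing a connected
subgraph with no cut vertex. -/
def IsBlock {V : Type*} (G : SimpleGraph V) (B : Set V) : Prop :=
  (G.induce B).Connected ∧ NoCutVertex G B ∧
    ∀ B' : Set V, B ⊆ B' → (G.induce B').Connected → NoCutVertex G B' → B' = B

/-- `B` induces a complete subgraph of `G`. -/
def IsCompleteSet {V : Type*} (G : SimpleGraph V) (B : Set V) : Prop :=
  ∀ u ∈ B, ∀ v ∈ B, u ≠ v → G.Adj u v

/-- `B` induces an odd cycle in `G`: a connected `2`-regular induced subgraph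
on an odd number (at least 3) of vertices. -/
def IsOddCycleSet {V : Type*} (G : SimpleGraph V) (B : Set V) : Prop :=
  Odd B.ncard ∧ 3 ≤ B.ncard ∧ (G.induce B).Connected ∧
    ∀ v ∈ B, (G.neighborSet v ∩ B).ncard = 2

/-- A Gallai tree: a connected graph each of whose blocks is a complete graph
or an odd cycle. -/
def IsGallaiTree {V : Type*} (G : SimpleGraph V) : Prop :=
  G.Connected ∧ ∀ B : Set V, IsBlock G B → IsCompleteSet G B ∨ IsOddCycleSet G B

open Classical in
/-- The minimum distance (in `G`) between two distinct connected components of the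
induced subgraph `G[S]`; it is `0` if `G[S]` has at most one component. -/
noncomputable def compDist {V : Type*} (G : SimpleGraph V) (S : Set V) : ℕ∞ :=
  if ∀ u v : S, (G.induce S).Reachable u v then 0
  else ⨅ (u : S) (v : S) (_ : ¬ (G.induce S).Reachable u v), G.edist u.1 v.1

/-- `S k` is the set of vertices of degree less than `k`. -/
def SmallDeg {V : Type*} (G : SimpleGraph V) (k : ℕ) : Set V :=
  {v | vdeg G v < k}

section Thomassen

variable {V : Type*} {G : SimpleGraph V}

/-! ### Connected sets -/

/-- `v` has a neighbour in `A`. -/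
def Touches (G : SimpleGraph V) (A : Set V) (v : V) : Prop :=
  ∃ a ∈ A, G.Adj a v

/-- `T` joins `p` and `r`: either `T` is empty and `p`, `r` are adjacent, or `T` is connected and
has an edge to `p` and an edge to `r`. -/
def Joins (G : SimpleGraph V) (T : Set V) (p r : V) : Prop :=
  T = ∅ ∧ G.Adj p r ∨ (G.induce T).Connected ∧ Touches G T p ∧ Touches G T r

lemma connected_singleton (v : V) : (G.induce {v}).Connected := by
  have : Nonempty ({v} : Set V) := ⟨⟨v, rfl⟩⟩
  rw [SimpleGraph.induce_singleton_eq_top]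
  exact SimpleGraph.connected_top

lemma connected_insert {T : Set V} {v : V} (hT : (G.induce T).Preconnected)
    (h : Touches G T v) : (G.induce (insert v T)).Connected := by
  obtain ⟨t, ht, hadj⟩ := h
  rw [Set.insert_eq]
  exact SimpleGraph.connected_induce_union (connected_singleton v).preconnected hT
    (Set.mem_singleton v) ht hadj.symm

lemma connected_insert_of_imp {T : Set V} {v : V} (hT : (G.induce T).Preconnected)
    (h : T.Nonempty → Touches G T v) : (G.induce (insert v T)).Connected := by
  rcases T.eq_empty_or_nonempty with rfl | hne
  · rw [insert_empty_eq]
    exact connected_singleton v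
  · exact connected_insert hT (h hne)

lemma Joins.connected_insert {T : Set V} {p r : V} (h : Joins G T p r) :
    (G.induce (insert p T)).Connected := by
  rcases h with ⟨rfl, _⟩ | ⟨hT, hp, _⟩
  · rw [insert_empty_eq]
    exact connected_singleton p
  · exact _root_.connected_insert hT.preconnected hp

lemma Joins.touches_insert {T : Set V} {p r : V} (h : Joins G T p r) :
    Touches G (insert p T) r := by
  rcases h with ⟨rfl, h⟩ | ⟨_, _, t, ht, h⟩
  · exact ⟨p, by simp, h⟩
  · exact ⟨t, by simp [ht], h⟩

/-- Two vertices of `W` are either joined by a set inside `W`, or separated in `W`. -/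
lemma joins_or_separated (W : Set V) {p r : V} (hp : p ∈ W) (hpr : p ≠ r) :
    (∃ T ⊆ W, p ∉ T ∧ r ∉ T ∧ Joins G T p r) ∨
    ∃ C ⊆ W, p ∈ C ∧ r ∉ C ∧ ∀ a ∈ C, ∀ b ∈ W, G.Adj a b → b ∈ C := by
  by_cases hadj : G.Adj p r
  · exact Or.inl ⟨∅, by simp, by simp, by simp, Or.inl ⟨rfl, hadj⟩⟩
  by_cases h : ∃ K ⊆ W, p ∉ K ∧ r ∉ K ∧ (G.induce K).Connected ∧ Touches G K p ∧ Touches G K r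
  · obtain ⟨K, hK, h1, h2, h3⟩ := h
    exact Or.inl ⟨K, hK, h1, h2, Or.inr h3⟩
  -- `C` consists of `p` and the vertices that connected sets attached to `p` reach.
  refine Or.inr ⟨{z | z = p ∨ ∃ K ⊆ W, p ∉ K ∧ r ∉ K ∧ (G.induce K).Connected ∧
    Touches G K p ∧ z ∈ K}, ?_, Or.inl rfl, ?_, ?_⟩
  · rintro z (rfl | ⟨K, hK, -, -, -, -, hz⟩)
    · exact hp
    · exact hK hz
  · rintro (h' | ⟨K, -, -, hr, -, -, hz⟩)
    · exact hpr h'.symm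
    · exact hr hz
  · rintro a (rfl | ⟨K, hK, h1, h2, h3, h4, hz⟩) b hb hab
    · have hbr : b ≠ r := by rintro rfl; exact hadj hab
      exact Or.inr ⟨{b}, by simpa using hb, by simpa using hab.ne, by simpa using hbr.symm,
        connected_singleton b, ⟨b, rfl, hab.symm⟩, rfl⟩
    · have hbr : b ≠ r := by
        rintro rfl
        exact h ⟨K, hK, h1, h2, h3, h4, a, hz, hab⟩
      by_cases hbp : b = p
      · exact Or.inl hbp
      obtain ⟨t, ht, htp⟩ := h4
      exact Or.inr ⟨insert b K, Set.insert_subset hb hK, by simp [h1, Ne.symm hbp],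
        by simp [h2, hbr.symm], connected_insert h3.preconnected ⟨a, hz, hab⟩,
        ⟨t, by simp [ht], htp⟩, by simp⟩

/-! ### Minors from three common neighbours -/

/-- A connected set `T` attached to `p`, `q` and `r`, each of which is also attached to `A` and to
`v`, gives a `K₃,₃`-minor. -/
lemma hasMinor_K33 {A T : Set V} {v p q r : V} (hA : (G.induce A).Connected)
    (hT : (G.induce T).Connected) (hAT : Disjoint A T)
    (hvA : v ∉ A) (hpA : p ∉ A) (hqA : q ∉ A) (hrA : r ∉ A)
    (hvT : v ∉ T) (hpT : p ∉ T) (hqT : q ∉ T) (hrT : r ∉ T)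
    (hpq : p ≠ q) (hpr : p ≠ r) (hqr : q ≠ r)
    (hvp : G.Adj v p) (hvq : G.Adj v q) (hvr : G.Adj v r)
    (hAp : Touches G A p) (hAq : Touches G A q) (hAr : Touches G A r)
    (hTp : Touches G T p) (hTq : Touches G T q) (hTr : Touches G T r) :
    HasMinor G (completeBipartiteGraph (Fin 3) (Fin 3)) := by
  have hX : ∀ i : Fin 3, (G.induce ((![A, {v}, T] : Fin 3 → Set V) i)).Connected := by
    intro i; fin_cases i
    · exact hA
    · exact connected_singleton v
    · exact hT
  have hE : ∀ i j : Fin 3, Touches G ((![A, {v}, T] : Fin 3 → Set V) i)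
      ((![p, q, r] : Fin 3 → V) j) := by
    intro i j
    fin_cases i <;> fin_cases j <;> first | assumption | exact ⟨v, rfl, by assumption⟩
  have hN : ∀ i j : Fin 3, ((![p, q, r] : Fin 3 → V) j) ∉
      ((![A, {v}, T] : Fin 3 → Set V) i) := by
    have := hvp.ne'; have := hvq.ne'; have := hvr.ne'
    intro i j
    fin_cases i <;> fin_cases j <;> assumption
  have hconn : ∀ i, (G.induce (Sum.elim (![A, {v}, T] : Fin 3 → Set V)
      (fun j => {(![p, q, r] : Fin 3 → V) j}) i)).Connected := by
    rintro (i | j)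
    · exact hX i
    · exact connected_singleton _
  refine ⟨_, fun i => Set.nonempty_coe_sort.mp (hconn i).nonempty, hconn, ?_, ?_⟩
  · rintro (i | i) (j | j) hij
    · have hij : i ≠ j := by rintro rfl; exact hij rfl
      clear hconn hN hE hX
      fin_cases i <;> fin_cases j <;> simp_all [disjoint_comm]
    · simpa using hN i j
    · simpa using hN j i
    · have hij : i ≠ j := by rintro rfl; exact hij rfl
      clear hconn hN hE hX
      fin_cases i <;> fin_cases j <;> simp_all [eq_comm]
  · rintro (i | i) (j | j) hij
    · simp at hij
    · obtain ⟨a, ha, h⟩ := hE i j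
      exact ⟨a, ha, _, rfl, h⟩
    · obtain ⟨a, ha, h⟩ := hE j i
      exact ⟨_, rfl, a, ha, h.symm⟩
    · simp at hij

lemma hasMinor_K5 (B : Fin 5 → Set V) (hc : ∀ i, (G.induce (B i)).Connected)
    (hd : ∀ i j, i < j → Disjoint (B i) (B j))
    (he : ∀ i j, i < j → ∃ u ∈ B i, ∃ v ∈ B j, G.Adj u v) :
    HasMinor G (completeGraph (Fin 5)) := by
  refine ⟨B, fun i => Set.nonempty_coe_sort.mp (hc i).nonempty, hc, ?_, ?_⟩
  · intro i j hij
    rcases lt_or_gt_of_ne hij with h | h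
    · exact hd i j h
    · exact (hd j i h).symm
  · intro i j hij
    rcases lt_or_gt_of_ne (show i ≠ j from hij) with h | h
    · exact he i j h
    · obtain ⟨u, hu, v, hv, h⟩ := he j i h
      exact ⟨v, hv, u, hu, h.symm⟩

/-- Three common neighbours `p`, `q`, `r` of `v` and `A` that are joined cyclically by disjoint
sets give a `K₅`-minor. -/
lemma hasMinor_K5_of_joins {A T₁ T₂ T₃ : Set V} {v p q r : V} (hA : (G.induce A).Connected)
    (hvA : v ∉ A) (hpA : p ∉ A) (hqA : q ∉ A) (hrA : r ∉ A)
    (hpq : p ≠ q) (hpr : p ≠ r) (hqr : q ≠ r)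
    (hvp : G.Adj v p) (hvq : G.Adj v q) (hvr : G.Adj v r)
    (hAv : Touches G A v) (hAp : Touches G A p) (hAq : Touches G A q) (hAr : Touches G A r)
    (hT₁ : ∀ t ∈ T₁, t ∉ A ∧ t ≠ v ∧ t ≠ p ∧ t ≠ q ∧ t ≠ r)
    (hT₂ : ∀ t ∈ T₂, t ∉ A ∧ t ≠ v ∧ t ≠ p ∧ t ≠ q ∧ t ≠ r)
    (hT₃ : ∀ t ∈ T₃, t ∉ A ∧ t ≠ v ∧ t ≠ p ∧ t ≠ q ∧ t ≠ r)
    (h12 : Disjoint T₁ T₂) (h13 : Disjoint T₁ T₃) (h23 : Disjoint T₂ T₃)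
    (h₁ : Joins G T₁ p q) (h₂ : Joins G T₂ q r) (h₃ : Joins G T₃ r p) :
    HasMinor G (completeGraph (Fin 5)) := by
  have := hvp.ne; have := hvq.ne; have := hvr.ne
  rw [Set.disjoint_left] at h12 h13 h23
  refine hasMinor_K5 ![A, {v}, insert p T₁, insert q T₂, insert r T₃] ?_ ?_ ?_
  · intro i; fin_cases i
    · exact hA
    · exact connected_singleton v
    · exact h₁.connected_insert
    · exact h₂.connected_insert
    · exact h₃.connected_insert
  · intro i j hij
    rw [Set.disjoint_left]
    fin_cases i <;> fin_cases j <;> simp at hij <;> simp <;> grind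
  · have hmem : ∀ {X Y : Set V} {x : V}, x ∈ Y → Touches G X x →
        ∃ u ∈ X, ∃ v ∈ Y, G.Adj u v := by
      rintro X Y x hx ⟨u, hu, h⟩
      exact ⟨u, hu, x, hx, h⟩
    intro i j hij
    fin_cases i <;> fin_cases j <;> simp only [Fin.reduceFinMk, Fin.isValue] at hij <;>
      first
      | exact absurd hij (by decide)
      | exact hmem (Set.mem_singleton v) hAv
      | exact hmem (Set.mem_insert _ _) hAp
      | exact hmem (Set.mem_insert _ _) hAq
      | exact hmem (Set.mem_insert _ _) hAr
      | exact ⟨v, rfl, _, Set.mem_insert _ _, by assumption⟩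
      | exact hmem (Set.mem_insert _ _) h₁.touches_insert
      | exact hmem (Set.mem_insert _ _) h₂.touches_insert
      | (obtain ⟨u, hu, h⟩ := h₃.touches_insert
         exact ⟨p, Set.mem_insert _ _, u, hu, h.symm⟩)

/-- Two meeting sets, one joining `p` to `q` and the other joining `q` to `r`, merge into a
connected set attached to all three. -/
lemma Joins.union {T₁ T₂ : Set V} {p q r : V} (h₁ : Joins G T₁ p q) (h₂ : Joins G T₂ q r)
    (h : ¬ Disjoint T₁ T₂) : (G.induce (T₁ ∪ T₂)).Connected ∧
      Touches G (T₁ ∪ T₂) p ∧ Touches G (T₁ ∪ T₂) q ∧ Touches G (T₁ ∪ T₂) r := by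
  rcases h₁ with ⟨rfl, _⟩ | ⟨c₁, ⟨a, ha, ha'⟩, ⟨b, hb, hb'⟩⟩
  · simp at h
  rcases h₂ with ⟨rfl, _⟩ | ⟨c₂, -, ⟨d, hd, hd'⟩⟩
  · simp at h
  exact ⟨SimpleGraph.induce_union_connected c₁.preconnected c₂.preconnected
    (Set.not_disjoint_iff_nonempty_inter.mp h), ⟨a, Or.inl ha, ha'⟩, ⟨b, Or.inl hb, hb'⟩,
    ⟨d, Or.inr hd, hd'⟩⟩

/-- A boundary vertex `v` with three boundary neighbours forms, with one of these neighbours, a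
pair that separates `U`. -/
lemma exists_separation (hG : IsPlanar G) {A U : Set V} (hA : (G.induce A).Connected)
    (hAU : Disjoint A U) {v p q r : V} (hv : v ∈ U) (hp : p ∈ U) (hq : q ∈ U) (hr : r ∈ U)
    (hpq : p ≠ q) (hpr : p ≠ r) (hqr : q ≠ r)
    (hvp : G.Adj v p) (hvq : G.Adj v q) (hvr : G.Adj v r)
    (hAv : Touches G A v) (hAp : Touches G A p) (hAq : Touches G A q) (hAr : Touches G A r) :
    ∃ s ∈ U, Touches G A s ∧ G.Adj v s ∧ ∃ C ⊆ U \ {v, s}, C.Nonempty ∧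
      ((U \ {v, s}) \ C).Nonempty ∧ ∀ a ∈ C, ∀ b ∈ U \ {v, s}, G.Adj a b → b ∈ C := by
  have nvp := hvp.ne'; have nvq := hvq.ne'; have nvr := hvr.ne'
  have hU : ∀ x ∈ U, x ∉ A := fun x hx hxA => Set.disjoint_left.mp hAU hxA hx
  rcases joins_or_separated (G := G) (U \ {v, r}) (p := p) (r := q)
    ⟨hp, by simp [*]⟩ hpq with ⟨T₁, hT₁, hp₁, hq₁, j₁⟩ | ⟨C, hC, h1, h2, h3⟩
  swap
  · exact ⟨r, hr, hAr, hvr, C, hC, ⟨p, h1⟩, ⟨q, ⟨hq, by simp [*]⟩, h2⟩, h3⟩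
  rcases joins_or_separated (G := G) (U \ {v, p}) (p := q) (r := r)
    ⟨hq, by simp [*, hpq.symm]⟩ hqr with ⟨T₂, hT₂, hq₂, hr₂, j₂⟩ | ⟨C, hC, h1, h2, h3⟩
  swap
  · exact ⟨p, hp, hAp, hvp, C, hC, ⟨q, h1⟩, ⟨r, ⟨hr, by simp [*, hpr.symm]⟩, h2⟩, h3⟩
  rcases joins_or_separated (G := G) (U \ {v, q}) (p := r) (r := p)
    ⟨hr, by simp [*, hqr.symm]⟩ hpr.symm with ⟨T₃, hT₃, hr₃, hp₃, j₃⟩ | ⟨C, hC, h1, h2, h3⟩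
  swap
  · exact ⟨q, hq, hAq, hvq, C, hC, ⟨r, h1⟩, ⟨p, ⟨hp, by simp [*]⟩, h2⟩, h3⟩
  exfalso
  have t₁ : ∀ t ∈ T₁, t ∉ A ∧ t ≠ v ∧ t ≠ p ∧ t ≠ q ∧ t ≠ r := by
    intro t ht
    have := hT₁ ht
    simp only [Set.mem_sdiff, Set.mem_insert_iff, Set.mem_singleton_iff] at this
    grind
  have t₂ : ∀ t ∈ T₂, t ∉ A ∧ t ≠ v ∧ t ≠ p ∧ t ≠ q ∧ t ≠ r := by
    intro t ht
    have := hT₂ ht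
    simp only [Set.mem_sdiff, Set.mem_insert_iff, Set.mem_singleton_iff] at this
    grind
  have t₃ : ∀ t ∈ T₃, t ∉ A ∧ t ≠ v ∧ t ≠ p ∧ t ≠ q ∧ t ≠ r := by
    intro t ht
    have := hT₃ ht
    simp only [Set.mem_sdiff, Set.mem_insert_iff, Set.mem_singleton_iff] at this
    grind
  have key : ∀ T : Set V, (∀ t ∈ T, t ∉ A ∧ t ≠ v ∧ t ≠ p ∧ t ≠ q ∧ t ≠ r) →
      (G.induce T).Connected → Touches G T p → Touches G T q → Touches G T r → False := by
    intro T t hT a b c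
    exact hG.2 (hasMinor_K33 hA hT
      (Set.disjoint_right.mpr fun x hx => (t x hx).1) (hU v hv) (hU p hp) (hU q hq) (hU r hr)
      (fun h => (t v h).2.1 rfl) (fun h => (t p h).2.2.1 rfl) (fun h => (t q h).2.2.2.1 rfl)
      (fun h => (t r h).2.2.2.2 rfl) hpq hpr hqr hvp hvq hvr hAp hAq hAr a b c)
  have tu : ∀ {X Y : Set V}, (∀ t ∈ X, t ∉ A ∧ t ≠ v ∧ t ≠ p ∧ t ≠ q ∧ t ≠ r) →
      (∀ t ∈ Y, t ∉ A ∧ t ≠ v ∧ t ≠ p ∧ t ≠ q ∧ t ≠ r) →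
      (∀ t ∈ X ∪ Y, t ∉ A ∧ t ≠ v ∧ t ≠ p ∧ t ≠ q ∧ t ≠ r) := by
    rintro X Y hX hY t (h | h)
    · exact hX t h
    · exact hY t h
  have d12 : Disjoint T₁ T₂ := by
    by_contra h
    obtain ⟨c, a, b, d⟩ := j₁.union j₂ h
    exact key _ (tu t₁ t₂) c a b d
  have d23 : Disjoint T₂ T₃ := by
    by_contra h
    obtain ⟨c, a, b, d⟩ := j₂.union j₃ h
    exact key _ (tu t₂ t₃) c d a b
  have d31 : Disjoint T₃ T₁ := by
    by_contra h
    obtain ⟨c, a, b, d⟩ := j₃.union j₁ h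
    exact key _ (tu t₃ t₁) c b d a
  exact hG.1 (hasMinor_K5_of_joins hA (hU v hv) (hU p hp) (hU q hq) (hU r hr) hpq hpr hqr
    hvp hvq hvr hAv hAp hAq hAr t₁ t₂ t₃ d12 d31.symm d23 j₁ j₂ j₃)

/-! ### Extending a precolouring -/

/-- Every properly precoloured clique `P` of boundary vertices extends to an `L`-colouring of `U`,
provided that the lists have size at least three outside `P` and at least five off the boundary.
The colours on `P` are prescribed by `c`, so the lists there play no role. -/
def Extendable (G : SimpleGraph V) (U : Finset V) (A : Set V) : Prop :=
  ∀ (P : Finset V) (c : V → ℕ) (L : V → Finset ℕ), P ⊆ U →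
    (∀ x ∈ P, Touches G A x) → (∀ x ∈ P, ∀ y ∈ P, x ≠ y → G.Adj x y ∧ c x ≠ c y) →
    (∀ u ∈ U, u ∉ P → 3 ≤ (L u).card) →
    (∀ u ∈ U, ¬ Touches G A u → 5 ≤ (L u).card) →
    ∃ φ : V → ℕ, (∀ u ∈ P, φ u = c u) ∧ (∀ u ∈ U, u ∉ P → φ u ∈ L u) ∧
      ∀ u ∈ U, ∀ w ∈ U, G.Adj u w → φ u ≠ φ w

open Classical in
/-- Moving `x ∈ P` from `U` to `A`. The vertex `x` itself need not touch `A`, so that this also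
covers the case of an empty `A`. -/
lemma extend_of_isolated {U P : Finset V} {A : Set V} {c : V → ℕ} {L : V → Finset ℕ} {x : V}
    (ih : Extendable G (U.erase x) (insert x A)) (hx : x ∈ P) (hPU : P ⊆ U)
    (hPA : ∀ y ∈ P, y ≠ x → Touches G A y) (hP : ∀ x ∈ P, ∀ y ∈ P, x ≠ y → G.Adj x y ∧ c x ≠ c y)
    (hL3 : ∀ u ∈ U, u ∉ P → 3 ≤ (L u).card)
    (hL5 : ∀ u ∈ U, ¬ Touches G A u → 5 ≤ (L u).card)
    (hiso : ∀ u ∈ U, u ∉ P → G.Adj x u → 5 ≤ (L u).card) :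
    ∃ φ : V → ℕ, (∀ u ∈ P, φ u = c u) ∧ (∀ u ∈ U, u ∉ P → φ u ∈ L u) ∧
      ∀ u ∈ U, ∀ w ∈ U, G.Adj u w → φ u ≠ φ w := by
  have mono : ∀ u, Touches G A u → Touches G (insert x A) u :=
    fun u ⟨a, ha, h⟩ => ⟨a, Or.inr ha, h⟩
  have tx : ∀ u, G.Adj x u → Touches G (insert x A) u := fun u h => ⟨x, Or.inl rfl, h⟩
  obtain ⟨φ, h1, h2, h3⟩ := ih (P.erase x) c
    (fun u => if G.Adj x u then (L u).erase (c x) else L u) (Finset.erase_subset_erase x hPU)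
    (fun y hy => mono y (hPA y (Finset.mem_of_mem_erase hy) (Finset.ne_of_mem_erase hy)))
    (fun y hy z hz => hP y (Finset.mem_of_mem_erase hy) z (Finset.mem_of_mem_erase hz))
    (by
      intro u hu huP
      have hux : u ≠ x := Finset.ne_of_mem_erase hu
      have huU := Finset.mem_of_mem_erase hu
      have huP : u ∉ P := fun h => huP (Finset.mem_erase.mpr ⟨hux, h⟩)
      split_ifs with h
      · have := hiso u huU huP h
        have := Finset.pred_card_le_card_erase (s := L u) (a := c x)
        omega
      · exact hL3 u huU huP)
    (by
      intro u hu ht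
      have h : ¬ G.Adj x u := fun h => ht (tx u h)
      simp only [h, if_false]
      exact hL5 u (Finset.mem_of_mem_erase hu) (fun h => ht (mono u h)))
  have hcol : ∀ u ∈ U, G.Adj x u → φ u ≠ c x := by
    intro u hu hadj
    by_cases huP : u ∈ P
    · rw [h1 u (Finset.mem_erase.mpr ⟨hadj.ne', huP⟩)]
      exact (hP u huP x hx hadj.ne').2
    · have := h2 u (Finset.mem_erase.mpr ⟨hadj.ne', hu⟩)
        (fun h => huP (Finset.mem_of_mem_erase h))
      simp only [hadj, if_true] at this
      exact Finset.ne_of_mem_erase this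
  refine ⟨Function.update φ x (c x), ?_, ?_, ?_⟩
  · intro u hu
    by_cases hux : u = x
    · subst hux; simp
    · simpa [hux] using h1 u (Finset.mem_erase.mpr ⟨hux, hu⟩)
  · intro u hu huP
    have hux : u ≠ x := by rintro rfl; exact huP hx
    have := h2 u (Finset.mem_erase.mpr ⟨hux, hu⟩) (fun h => huP (Finset.mem_of_mem_erase h))
    simp only [Function.update_of_ne hux]
    split_ifs at this
    · exact Finset.mem_of_mem_erase this
    · exact this
  · intro u hu w hw hadj
    by_cases hux : u = x
    · subst hux
      simpa [hadj.ne'] using (hcol w hw hadj).symm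
    by_cases hwx : w = x
    · subst hwx
      simpa [hadj.ne] using hcol u hu hadj.symm
    simpa [hux, hwx] using h3 u (Finset.mem_erase.mpr ⟨hux, hu⟩) w
      (Finset.mem_erase.mpr ⟨hwx, hw⟩) hadj

open Classical in
/-- Moving to `A` a boundary vertex `v ∉ P` all of whose boundary neighbours are `x ∈ P` and `w`;
two colours of `v` are reserved. -/
lemma extend_of_two {U P : Finset V} {A : Set V} {c : V → ℕ} {L : V → Finset ℕ} {x v w : V}
    (ih : Extendable G (U.erase v) (insert v A)) (hx : x ∈ P) (hPU : P ⊆ U)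
    (hPA : ∀ x ∈ P, Touches G A x) (hP : ∀ x ∈ P, ∀ y ∈ P, x ≠ y → G.Adj x y ∧ c x ≠ c y)
    (hL3 : ∀ u ∈ U, u ∉ P → 3 ≤ (L u).card)
    (hL5 : ∀ u ∈ U, ¬ Touches G A u → 5 ≤ (L u).card)
    (hvU : v ∈ U) (hvP : v ∉ P)
    (hvn : ∀ u ∈ U, Touches G A u → G.Adj v u → u = x ∨ u = w) :
    ∃ φ : V → ℕ, (∀ u ∈ P, φ u = c u) ∧ (∀ u ∈ U, u ∉ P → φ u ∈ L u) ∧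
      ∀ u ∈ U, ∀ w ∈ U, G.Adj u w → φ u ≠ φ w := by
  have mono : ∀ u, Touches G A u → Touches G (insert v A) u :=
    fun u ⟨a, ha, h⟩ => ⟨a, Or.inr ha, h⟩
  have tv : ∀ u, G.Adj v u → Touches G (insert v A) u := fun u h => ⟨v, Or.inl rfl, h⟩
  have hvne : ∀ {u}, u ∈ P → u ≠ v := by rintro u hu rfl; exact hvP hu
  obtain ⟨α, hα, β, hβ, hαβ⟩ : ∃ α ∈ (L v).erase (c x), ∃ β ∈ (L v).erase (c x), α ≠ β := by
    apply Finset.one_lt_card.mp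
    have := hL3 v hvU hvP
    have := Finset.pred_card_le_card_erase (s := L v) (a := c x)
    omega
  obtain ⟨φ, h1, h2, h3⟩ := ih P c
    (fun u => if G.Adj v u ∧ ¬ Touches G A u then ((L u).erase α).erase β else L u)
    (fun u hu => Finset.mem_erase.mpr ⟨hvne hu, hPU hu⟩)
    (fun y hy => mono y (hPA y hy)) hP
    (by
      intro u hu huP
      have huU := Finset.mem_of_mem_erase hu
      split_ifs with h
      · have := hL5 u huU h.2
        have := Finset.pred_card_le_card_erase (s := L u) (a := α)
        have := Finset.pred_card_le_card_erase (s := (L u).erase α) (a := β)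
        omega
      · exact hL3 u huU huP)
    (by
      intro u hu ht
      have h : ¬ G.Adj v u := fun h => ht (tv u h)
      simp only [h, false_and, if_false]
      exact hL5 u (Finset.mem_of_mem_erase hu) (fun h => ht (mono u h)))
  obtain ⟨γ, hγ, hγw⟩ : ∃ γ, (γ = α ∨ γ = β) ∧ γ ≠ φ w := by
    by_cases h : α = φ w
    · exact ⟨β, Or.inr rfl, fun h' => hαβ (h.trans h'.symm)⟩
    · exact ⟨α, Or.inl rfl, h⟩
  have hγL : γ ∈ (L v).erase (c x) := by rcases hγ with rfl | rfl <;> assumption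
  have hcol : ∀ u ∈ U, G.Adj v u → φ u ≠ γ := by
    intro u hu hadj
    by_cases ht : Touches G A u
    · rcases hvn u hu ht hadj with rfl | rfl
      · rw [h1 u hx]
        exact (Finset.ne_of_mem_erase hγL).symm
      · exact hγw.symm
    · have := h2 u (Finset.mem_erase.mpr ⟨hadj.ne', hu⟩) (fun h => ht (hPA u h))
      simp only [hadj, ht, not_false_eq_true, and_self, if_true] at this
      simp only [Finset.mem_erase] at this
      rcases hγ with rfl | rfl
      · exact this.2.1
      · exact this.1
  refine ⟨Function.update φ v γ, ?_, ?_, ?_⟩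
  · intro u hu
    simpa [hvne hu] using h1 u hu
  · intro u hu huP
    by_cases huv : u = v
    · subst huv
      simpa using Finset.mem_of_mem_erase hγL
    have := h2 u (Finset.mem_erase.mpr ⟨huv, hu⟩) huP
    simp only [Function.update_of_ne huv]
    split_ifs at this
    · exact Finset.mem_of_mem_erase (Finset.mem_of_mem_erase this)
    · exact this
  · intro u hu z hz hadj
    by_cases huv : u = v
    · subst huv
      simpa [hadj.ne'] using (hcol z hz hadj).symm
    by_cases hzv : z = v
    · subst hzv
      simpa [hadj.ne] using hcol u hu hadj.symm
    simpa [huv, hzv] using h3 u (Finset.mem_erase.mpr ⟨huv, hu⟩) z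
      (Finset.mem_erase.mpr ⟨hzv, hz⟩) hadj

open Classical in
/-- Gluing along an edge `v s` of boundary vertices: the side `U₁` containing `P` is coloured
first, then the other side `U₂`, with `v` and `s` precoloured. -/
lemma extend_of_separation {U U₁ U₂ P : Finset V} {A : Set V} {c : V → ℕ} {L : V → Finset ℕ}
    {v s : V} (ih₁ : Extendable G U₁ A) (ih₂ : Extendable G U₂ A) (hPU : P ⊆ U₁)
    (hPA : ∀ x ∈ P, Touches G A x) (hP : ∀ x ∈ P, ∀ y ∈ P, x ≠ y → G.Adj x y ∧ c x ≠ c y)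
    (hL3 : ∀ u ∈ U, u ∉ P → 3 ≤ (L u).card)
    (hL5 : ∀ u ∈ U, ¬ Touches G A u → 5 ≤ (L u).card)
    (hU : U = U₁ ∪ U₂) (hI : U₁ ∩ U₂ = {v, s}) (hAv : Touches G A v) (hAs : Touches G A s)
    (hvs : G.Adj v s) (hsep : ∀ a ∈ U₁, ∀ b ∈ U₂, G.Adj a b → a ∈ U₂ ∨ b ∈ U₁) :
    ∃ φ : V → ℕ, (∀ u ∈ P, φ u = c u) ∧ (∀ u ∈ U, u ∉ P → φ u ∈ L u) ∧
      ∀ u ∈ U, ∀ w ∈ U, G.Adj u w → φ u ≠ φ w := by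
  have hmem : ∀ u, (u ∈ U₁ ∧ u ∈ U₂) ↔ (u = v ∨ u = s) := by
    intro u
    rw [← Finset.mem_inter, hI]; simp
  have hv := (hmem v).mpr (Or.inl rfl)
  have hs := (hmem s).mpr (Or.inr rfl)
  obtain ⟨φ, h1, h2, h3⟩ := ih₁ P c L hPU hPA hP
    (fun u hu => hL3 u (hU ▸ Finset.mem_union_left _ hu))
    (fun u hu => hL5 u (hU ▸ Finset.mem_union_left _ hu))
  obtain ⟨ψ, k1, k2, k3⟩ := ih₂ {v, s} φ L
    (by intro u hu; exact ((hmem u).mpr (by simpa using hu)).2)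
    (by intro u hu; simp only [Finset.mem_insert, Finset.mem_singleton] at hu
        rcases hu with rfl | rfl <;> assumption)
    (by
      have := h3 v hv.1 s hs.1 hvs
      intro a ha b hb hab
      simp only [Finset.mem_insert, Finset.mem_singleton] at ha hb
      rcases ha with rfl | rfl <;> rcases hb with rfl | rfl
      · exact absurd rfl hab
      · exact ⟨hvs, this⟩
      · exact ⟨hvs.symm, this.symm⟩
      · exact absurd rfl hab)
    (by
      intro u hu hu'
      simp only [Finset.mem_insert, Finset.mem_singleton, ← hmem] at hu'
      exact hL3 u (hU ▸ Finset.mem_union_right _ hu) (fun h => hu' ⟨hPU h, hu⟩))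
    (fun u hu => hL5 u (hU ▸ Finset.mem_union_right _ hu))
  have hψ : ∀ u ∈ U₁, u ∈ U₂ → ψ u = φ u := by
    intro u a b
    exact k1 u (by simpa using (hmem u).mp ⟨a, b⟩)
  refine ⟨fun u => if u ∈ U₁ then φ u else ψ u, ?_, ?_, ?_⟩
  · intro u hu
    simp only [hPU hu, if_true]
    exact h1 u hu
  · intro u hu huP
    dsimp only
    split_ifs with h
    · exact h2 u h huP
    · have hu2 : u ∈ U₂ := by
        rw [hU, Finset.mem_union] at hu
        exact hu.resolve_left h
      refine k2 u hu2 ?_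
      simp only [Finset.mem_insert, Finset.mem_singleton, ← hmem]
      exact fun h' => h h'.1
  · intro u hu w hw hadj
    rw [hU, Finset.mem_union] at hu hw
    dsimp only
    split_ifs with a b b
    · exact h3 u a w b hadj
    · have hw2 := hw.resolve_left b
      have hu2 := (hsep u a w hw2 hadj).resolve_right b
      rw [← hψ u a hu2]
      exact k3 u hu2 w hw2 hadj
    · have hu2 := hu.resolve_left a
      have hw2 := (hsep w b u hu2 hadj.symm).resolve_right a
      rw [← hψ w b hw2]
      exact k3 u hu2 w hw2 hadj
    · exact k3 u (hu.resolve_left a) w (hw.resolve_left b) hadj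

open Classical in
/-- The strengthened form of Thomassen's theorem that is proved by induction on `U`. The set `A`
may be empty, in which case all lists have size at least five. -/
theorem exists_extension (hG : IsPlanar G) (U : Finset V) :
    ∀ A : Set V, (G.induce A).Preconnected → Disjoint A (U : Set V) → Extendable G U A := by
  induction U using Finset.strongInduction with
  | H U ih =>
  intro A hA hAU
  have hnA : ∀ u ∈ U, u ∉ A := fun u hu hA => Set.disjoint_left.mp hAU hA hu
  have hdel : ∀ x ∈ U, (A.Nonempty → Touches G A x) →
      Extendable G (U.erase x) (insert x A) := by
    intro x hx ht
    refine ih _ (Finset.erase_ssubset hx) _ (connected_insert_of_imp hA ht).preconnected ?_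
    rw [Set.disjoint_left]
    rintro u (rfl | hu) h
    · simp at h
    · exact hnA u (Finset.mem_of_mem_erase h) hu
  have main : ∀ (P : Finset V) (c : V → ℕ) (L : V → Finset ℕ), P.Nonempty → P ⊆ U →
      (∀ x ∈ P, Touches G A x) → (∀ x ∈ P, ∀ y ∈ P, x ≠ y → G.Adj x y ∧ c x ≠ c y) →
      (∀ u ∈ U, u ∉ P → 3 ≤ (L u).card) →
      (∀ u ∈ U, ¬ Touches G A u → 5 ≤ (L u).card) →
      ∃ φ : V → ℕ, (∀ u ∈ P, φ u = c u) ∧ (∀ u ∈ U, u ∉ P → φ u ∈ L u) ∧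
        ∀ u ∈ U, ∀ w ∈ U, G.Adj u w → φ u ≠ φ w := by
    rintro P c L ⟨x, hx⟩ hPU hPA hP hL3 hL5
    by_cases hiso : ∀ u ∈ U, u ∉ P → G.Adj x u → ¬ Touches G A u
    · exact extend_of_isolated (hdel x (hPU hx) fun _ => hPA x hx) hx hPU (fun y hy _ => hPA y hy) hP hL3 hL5
        (fun u hu huP hadj => hL5 u hu (hiso u hu huP hadj))
    push Not at hiso
    obtain ⟨v, hvU, hvP, hxv, hAv⟩ := hiso
    by_cases hw : ∃ w, ∀ u ∈ U, Touches G A u → G.Adj v u → u = x ∨ u = w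
    · obtain ⟨w, hw⟩ := hw
      exact extend_of_two (hdel v hvU fun _ => hAv) hx hPU hPA hP hL3 hL5 hvU hvP hw
    push Not at hw
    -- Two applications of `hw` produce the second and the third boundary neighbour of `v`.
    obtain ⟨q, hqU, hAq, hvq, hqx, -⟩ := hw x
    obtain ⟨r, hrU, hAr, hvr, hrx, hrq⟩ := hw q
    have hAc : (G.induce A).Connected := by
      obtain ⟨a, ha, -⟩ := hAv
      have : Nonempty A := ⟨⟨a, ha⟩⟩
      exact ⟨hA⟩
    obtain ⟨s, hsU, hAs, hvs, C, hCU, hC, hD, hsep⟩ := exists_separation hG hAc hAU hvU (hPU hx)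
      hqU hrU hqx.symm hrx.symm hrq.symm hxv.symm hvq hvr hAv (hPA x hx) hAq hAr
    have hCU' : ∀ u ∈ C, u ∈ U ∧ u ≠ v ∧ u ≠ s := by
      intro u hu
      simpa using hCU hu
    have hsep' : ∀ a ∈ C, ∀ b ∈ U, b ≠ v → b ≠ s → G.Adj a b → b ∈ C :=
      fun a ha b hb h1 h2 => hsep a ha b ⟨hb, by simp [h1, h2]⟩
    obtain ⟨y, hy⟩ := hC
    obtain ⟨z, ⟨hzU, hzvs⟩, hzC⟩ := hD
    simp only [Set.mem_insert_iff, Set.mem_singleton_iff, not_or] at hzvs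
    have hyU := hCU' y hy
    let U₁ := U.filter fun u => u ∈ C ∨ u = v ∨ u = s
    let U₂ := U.filter fun u => u ∉ C
    have m₁ : ∀ u, u ∈ U₁ ↔ u ∈ U ∧ (u ∈ C ∨ u = v ∨ u = s) := fun u => Finset.mem_filter
    have m₂ : ∀ u, u ∈ U₂ ↔ u ∈ U ∧ u ∉ C := fun u => Finset.mem_filter
    have e₁ : Extendable G U₁ A := by
      refine ih U₁ ⟨Finset.filter_subset _ _, fun h => ?_⟩ A hA
        (hAU.mono_right (by exact_mod_cast Finset.filter_subset _ _))
      have := (m₁ z).mp (h hzU)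
      grind
    have e₂ : Extendable G U₂ A := by
      refine ih U₂ ⟨Finset.filter_subset _ _, fun h => ?_⟩ A hA
        (hAU.mono_right (by exact_mod_cast Finset.filter_subset _ _))
      have := (m₂ y).mp (h hyU.1)
      grind
    have hvC : v ∉ C := fun h => (hCU' v h).2.1 rfl
    have hsC : s ∉ C := fun h => (hCU' s h).2.2 rfl
    have hunion : U = U₁ ∪ U₂ := by
      ext u; rw [Finset.mem_union, m₁, m₂]; tauto
    have hinter : U₁ ∩ U₂ = {v, s} := by
      ext u
      rw [Finset.mem_inter, m₁, m₂]
      simp only [Finset.mem_insert, Finset.mem_singleton]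
      constructor
      · tauto
      · rintro (rfl | rfl) <;> tauto
    have hcross : ∀ a ∈ U₁, ∀ b ∈ U₂, G.Adj a b → a ∈ U₂ ∨ b ∈ U₁ := by
      intro a ha b hb hab
      rw [m₁] at ha ⊢; rw [m₂] at hb ⊢
      have := hsep' a
      grind
    -- The clique `P` cannot meet both `C` and its complement in `U \ {v, s}`.
    by_cases hPC : P ⊆ U₁
    · exact extend_of_separation e₁ e₂ hPC hPA hP hL3 hL5 hunion hinter hAv hAs hvs hcross
    · have hPC₂ : P ⊆ U₂ := by
        obtain ⟨p, hp, hp₁⟩ := Finset.not_subset.mp hPC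
        intro u hu
        refine (m₂ u).mpr ⟨hPU hu, fun huC => hp₁ ((m₁ p).mpr ⟨hPU hp, ?_⟩)⟩
        by_contra hcon
        push Not at hcon
        have hne : u ≠ p := by rintro rfl; exact hcon.1 huC
        exact hcon.1 (hsep' u huC p (hPU hp) hcon.2.1 hcon.2.2 (hP u hu p hp hne).1)
      exact extend_of_separation e₂ e₁ hPC₂ hPA hP hL3 hL5 (by rw [hunion, Finset.union_comm])
        (by rw [Finset.inter_comm, hinter]) hAv hAs hvs
        (fun a ha b hb hab => (hcross b hb a ha hab.symm).symm)
  intro P c L hPU hPA hP hL3 hL5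
  rcases P.eq_empty_or_nonempty with rfl | hne
  swap
  · exact main P c L hne hPU hPA hP hL3 hL5
  -- With `P` empty, precolour one vertex: a boundary vertex if there is one.
  rcases U.eq_empty_or_nonempty with rfl | ⟨x, hx⟩
  · exact ⟨c, by simp, by simp, by simp⟩
  have hLne : ∀ x ∈ U, ∃ k, k ∈ L x := fun x hx =>
    Finset.card_pos.mp (by have := hL3 x hx (by simp); omega)
  by_cases hb : ∃ x ∈ U, Touches G A x
  · obtain ⟨x, hx, ht⟩ := hb
    obtain ⟨k, hk⟩ := hLne x hx
    obtain ⟨φ, h1, h2, h3⟩ := main {x} (fun _ => k) L (by simp) (by simpa using hx)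
      (by simpa using ht) (by simp +contextual) (fun u hu _ => hL3 u hu (by simp)) hL5
    refine ⟨φ, by simp, fun u hu _ => ?_, h3⟩
    by_cases hux : u = x
    · subst hux
      rw [h1 u (by simp)]
      exact hk
    · exact h2 u hu (by simpa using hux)
  · push Not at hb
    obtain ⟨k, hk⟩ := hLne x hx
    have h5 : ∀ u ∈ U, 5 ≤ (L u).card := fun u hu => hL5 u hu (hb u hu)
    -- No vertex of `U` is attached to `A`, so `A` may be replaced by the single vertex `x`.
    have e : Extendable G (U.erase x) {x} :=
      ih _ (Finset.erase_ssubset hx) _ (connected_singleton x).preconnected (by simp)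
    obtain ⟨φ, h1, h2, h3⟩ := extend_of_isolated (U := U) (P := {x}) (A := ∅) (c := fun _ => k)
      (L := L) (x := x) (by simpa using e) (by simp) (by simpa using hx) (by simp)
      (by simp +contextual) (fun u hu _ => hL3 u hu (by simp)) (fun u hu _ => h5 u hu)
      (fun u hu _ _ => h5 u hu)
    refine ⟨φ, by simp, fun u hu _ => ?_, h3⟩
    by_cases hux : u = x
    · subst hux
      rw [h1 u (by simp)]
      exact hk
    · exact h2 u hu (by simpa using hux)

end Thomassen

/-- Thomassen: every planar graph is 5-list colorable. -/
theorem stmt_0 {V : Type*} [Fintype V] (G : SimpleGraph V) (hG : IsPlanar G)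
    (L : V → Finset ℕ) (hL : ∀ v, (L v).card = 5) :
    ∃ φ : V → ℕ, IsListColoring G L φ := by
  classical
  -- The induction starts with nothing deleted and nothing precoloured.
  obtain ⟨φ, -, h2, h3⟩ := exists_extension hG Finset.univ ∅ (fun x => x.2.elim) (by simp)
    ∅ (fun _ => 0) L (by simp) (by simp) (by simp) (fun u _ _ => by rw [hL]; omega)
    (fun u _ _ => (hL u).ge)
  exact ⟨φ, fun v => h2 v (Finset.mem_univ v) (by simp),
    fun u v h => h3 u (Finset.mem_univ u) v (Finset.mem_univ v) h⟩
end

section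
/- Every K5-minor-free graph is 5-list colorable; that is, for every graph G with no minor isomorphic to K5 and every list assignment L with |L(v)| = 5 for all vertices v of G, the graph G admits an L-coloring. -/
/-!
The proof adapts Thomassen's argument for planar graphs, with the outer cycle replaced by the
neighbourhood of an apex vertex. It uses neither planarity nor Wagner's structure theorem.

The statement is strengthened to instances (`Inst`) consisting of a vertex `a` and a finite set `U`
not containing `a` such that `H[U ∪ {a}]` has no `K₅`-minor, a precoloured clique `X ⊆ U` of at most
two neighbours of `a`, and lists on `U \ X` of size at least three at the neighbours of `a` and at
least five elsewhere. Every instance can be coloured (`solvableBelow`), by induction on `|U|`.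

* If some set `T` of at most two neighbours of `a` separates `H[U]`, colour the side containing `X`
  and then the other side with `T` precoloured (`sol_of_sep`, `no_sep`). When `T` consists of two
  non-adjacent vertices, the edge joining them is added; on each side it can be realised by
  contracting a connected piece of the opposite side, so no `K₅`-minor arises.
* If all neighbours of `a` in `U` are precoloured, drop `a` and let a precoloured vertex become the
  apex (`sol_of_subset`).
* Suppose an uncoloured neighbour `v` of `a` has `q ≤ 1` uncoloured and `p` precoloured neighbours
  inside the neighbourhood of `a`, and `p + q ≤ 2`. Reserve `q + 1` colours for `v`, delete them
  from the lists of the neighbours of `v` not adjacent to `a`, and contract `v` into `a`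
  (`sol_of_contract`).

One of these cases applies as soon as `X` is nonempty (`sol_of_nonempty`). If none did, the
neighbourhood of `a` would contain a cycle: either some vertex in it sees both precoloured vertices,
which are adjacent, or its uncoloured vertices span a graph of minimum degree at least two
(`exists_cyc`). As no two neighbours of `a` separate `H[U]` and there is no `K₅`-minor, the cycle is
the entire neighbourhood of `a` in `U` (`IsCyc.covers`) and has no chord (`IsCyc.chordless`). An
uncoloured vertex next to a precoloured one on this cycle then has exactly two neighbours in the
neighbourhood of `a`, one of them precoloured, so the third case does apply to it.

The theorem follows by precolouring a single vertex, which serves as the first apex.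
-/

open SimpleGraph

section Choosability

variable {V : Type*}

/-! ### Connected sets and `K₅`-minors -/

/-- `S` is nonempty and spans a connected subgraph of `H`, phrased without walks: a subset of `S`
that is nonempty and closed under taking neighbours inside `S` is all of `S`. -/
def Conn (H : SimpleGraph V) (S : Set V) : Prop :=
  S.Nonempty ∧ ∀ P : Set V, (∃ u ∈ S, u ∈ P) →
    (∀ u ∈ S, u ∈ P → ∀ v ∈ S, H.Adj u v → v ∈ P) → ∀ v ∈ S, v ∈ P

/-- Some edge of `H` joins `S` to `T`. -/
def Linked (H : SimpleGraph V) (S T : Set V) : Prop :=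
  ∃ u ∈ S, ∃ v ∈ T, H.Adj u v

/-- `H` has a `K₅`-minor all of whose branch sets lie in `D`; equivalently `H[D]` has a
`K₅`-minor. -/
def K5In (H : SimpleGraph V) (D : Set V) : Prop :=
  ∃ B : Fin 5 → Set V, (∀ i, B i ⊆ D) ∧ (∀ i, Conn H (B i)) ∧
    (∀ i j, i ≠ j → Disjoint (B i) (B j)) ∧ (∀ i j, i ≠ j → Linked H (B i) (B j))

theorem Linked.symm {H : SimpleGraph V} {S T : Set V} (h : Linked H S T) : Linked H T S := by
  obtain ⟨u, hu, v, hv, huv⟩ := h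
  exact ⟨v, hv, u, hu, huv.symm⟩

theorem Conn.induce_connected {H : SimpleGraph V} {S : Set V} (h : Conn H S) :
    (H.induce S).Connected := by
  obtain ⟨⟨r, hr⟩, h⟩ := h
  have key : ∀ v ∈ S, v ∈ {v | ∃ hv : v ∈ S, (H.induce S).Reachable ⟨r, hr⟩ ⟨v, hv⟩} := by
    refine h _ ⟨r, hr, hr, SimpleGraph.Reachable.refl _⟩ ?_
    rintro u hu ⟨_, hru⟩ v hv huv
    refine ⟨hv, hru.trans (SimpleGraph.Adj.reachable ?_)⟩
    simpa using huv
  have : Nonempty S := ⟨⟨r, hr⟩⟩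
  refine ⟨fun u v => ?_⟩
  obtain ⟨_, h1⟩ := key u u.2
  obtain ⟨_, h2⟩ := key v v.2
  exact h1.symm.trans h2

theorem K5In.hasMinor {H : SimpleGraph V} {D : Set V} (h : K5In H D) :
    HasMinor H (completeGraph (Fin 5)) := by
  obtain ⟨B, -, hc, hd, ha⟩ := h
  exact ⟨B, fun i => (hc i).1, fun i => (hc i).induce_connected, fun i j hij => hd i j hij,
    fun i j hij => ha i j hij.ne⟩

theorem K5In.mono {H : SimpleGraph V} {D E : Set V} (h : K5In H D) (hDE : D ⊆ E) : K5In H E := by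
  obtain ⟨B, hB, hc⟩ := h
  exact ⟨B, fun i => (hB i).trans hDE, hc⟩

theorem K5In.mk5 {H : SimpleGraph V} {D A₀ A₁ A₂ A₃ A₄ : Set V}
    (s₀ : A₀ ⊆ D) (s₁ : A₁ ⊆ D) (s₂ : A₂ ⊆ D) (s₃ : A₃ ⊆ D) (s₄ : A₄ ⊆ D)
    (c₀ : Conn H A₀) (c₁ : Conn H A₁) (c₂ : Conn H A₂) (c₃ : Conn H A₃) (c₄ : Conn H A₄)
    (d₀₁ : Disjoint A₀ A₁) (d₀₂ : Disjoint A₀ A₂) (d₀₃ : Disjoint A₀ A₃) (d₀₄ : Disjoint A₀ A₄)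
    (d₁₂ : Disjoint A₁ A₂) (d₁₃ : Disjoint A₁ A₃) (d₁₄ : Disjoint A₁ A₄)
    (d₂₃ : Disjoint A₂ A₃) (d₂₄ : Disjoint A₂ A₄) (d₃₄ : Disjoint A₃ A₄)
    (l₀₁ : Linked H A₀ A₁) (l₀₂ : Linked H A₀ A₂) (l₀₃ : Linked H A₀ A₃) (l₀₄ : Linked H A₀ A₄)
    (l₁₂ : Linked H A₁ A₂) (l₁₃ : Linked H A₁ A₃) (l₁₄ : Linked H A₁ A₄)
    (l₂₃ : Linked H A₂ A₃) (l₂₄ : Linked H A₂ A₄) (l₃₄ : Linked H A₃ A₄) : K5In H D := by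
  refine ⟨![A₀, A₁, A₂, A₃, A₄], ?_, ?_, ?_, ?_⟩
  · intro i; fin_cases i <;> assumption
  · intro i; fin_cases i <;> assumption
  · intro i j hij
    fin_cases i <;> fin_cases j <;>
      first | exact absurd rfl hij | assumption | (apply Disjoint.symm; assumption)
  · intro i j hij
    fin_cases i <;> fin_cases j <;>
      first | exact absurd rfl hij | assumption | (apply Linked.symm; assumption)

theorem Conn.singleton (H : SimpleGraph V) (v : V) : Conn H {v} := by
  refine ⟨⟨v, rfl⟩, ?_⟩
  rintro P ⟨u, rfl, hu⟩ - w rfl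
  exact hu

theorem Conn.union {H : SimpleGraph V} {S T : Set V} (hS : Conn H S) (hT : Conn H T)
    (h : Linked H S T) : Conn H (S ∪ T) := by
  obtain ⟨s, hs, t, ht, hst⟩ := h
  refine ⟨⟨s, Or.inl hs⟩, fun P hP hcl => ?_⟩
  have h1 : (∃ u ∈ S, u ∈ P) → ∀ v ∈ S, v ∈ P := fun h => hS.2 P h
    fun u hu hp v hv => hcl u (Or.inl hu) hp v (Or.inl hv)
  have h2 : (∃ u ∈ T, u ∈ P) → ∀ v ∈ T, v ∈ P := fun h => hT.2 P h
    fun u hu hp v hv => hcl u (Or.inr hu) hp v (Or.inr hv)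
  have h3 : s ∈ P → t ∈ P := fun h => hcl s (Or.inl hs) h t (Or.inr ht) hst
  have h4 : t ∈ P → s ∈ P := fun h => hcl t (Or.inr ht) h s (Or.inl hs) hst.symm
  obtain ⟨u, hu | hu, huP⟩ := hP
  · have := h1 ⟨u, hu, huP⟩
    have := h2 ⟨t, ht, h3 (this s hs)⟩
    rintro v (hv | hv) <;> tauto
  · have := h2 ⟨u, hu, huP⟩
    have := h1 ⟨s, hs, h4 (this t ht)⟩
    rintro v (hv | hv) <;> tauto

/-- The connected component of `w` in `H[Z]`. -/
theorem exists_component (H : SimpleGraph V) (Z : Set V) {w : V} (hw : w ∈ Z) :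
    ∃ C ⊆ Z, w ∈ C ∧ Conn H C ∧ ∀ p ∈ C, ∀ q ∈ Z, H.Adj p q → q ∈ C := by
  let C : Set V := {z | z ∈ Z ∧ ∀ P : Set V, w ∈ P →
    (∀ p ∈ Z, p ∈ P → ∀ q ∈ Z, H.Adj p q → q ∈ P) → z ∈ P}
  have hwC : w ∈ C := ⟨hw, fun P h _ => h⟩
  have hcl : ∀ p ∈ C, ∀ q ∈ Z, H.Adj p q → q ∈ C := fun p hp q hq hpq =>
    ⟨hq, fun P h1 h2 => h2 p hp.1 (hp.2 P h1 h2) q hq hpq⟩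
  have key : ∀ P : Set V, w ∈ P → (∀ u ∈ C, u ∈ P → ∀ v ∈ C, H.Adj u v → v ∈ P) →
      ∀ v ∈ C, v ∈ P := by
    intro P hwP hP v hv
    refine (hv.2 (P ∩ C) ⟨hwP, hwC⟩ ?_).1
    rintro p - ⟨hp, hpC⟩ q hq hpq
    have := hcl p hpC q hq hpq
    exact ⟨hP p hpC hp q this hpq, this⟩
  refine ⟨C, fun z hz => hz.1, hwC, ⟨⟨w, hwC⟩, ?_⟩, hcl⟩
  rintro P ⟨u, huC, huP⟩ hP
  by_cases hwP : w ∈ P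
  · exact key P hwP hP
  · refine absurd huP (key Pᶜ hwP ?_ u huC)
    intro p hp hpP q hq hpq hqP
    exact hpP (hP q hq hqP p hp hpq.symm)

/-- If `H'[D']` arises from a subgraph of `H[D]` by contracting the connected set `Q` into a
neighbouring vertex `s`, then a `K₅`-minor of `H'[D']` yields one of `H[D]`. -/
theorem K5In.of_contract {H H' : SimpleGraph V} {D D' Q : Set V} {s : V}
    (hD : D' ⊆ D) (hs : s ∈ D') (hQD : Q ⊆ D) (hQD' : Disjoint Q D') (hQ : Conn H Q)
    (hsQ : ∃ q ∈ Q, H.Adj s q)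
    (h1 : ∀ p ∈ D', ∀ q ∈ D', p ≠ s → q ≠ s → H'.Adj p q → H.Adj p q)
    (h2 : ∀ w ∈ D', H'.Adj s w → H.Adj s w ∨ ∃ q ∈ Q, H.Adj q w)
    (h : K5In H' D') : K5In H D := by
  classical
  obtain ⟨B, hB, hc, hd, hl⟩ := h
  obtain ⟨q₀, hq₀, hsq₀⟩ := hsQ
  have hBQ : ∀ i, Disjoint (B i) Q := fun i => (hQD'.mono_right (hB i)).symm
  have hsub : ∀ i, B i ⊆ if s ∈ B i then B i ∪ Q else B i := by
    intro i; split_ifs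
    · exact Set.subset_union_left
    · exact subset_rfl
  refine ⟨fun i => if s ∈ B i then B i ∪ Q else B i, ?_, ?_, ?_, ?_⟩
  · intro i
    dsimp only
    split_ifs
    · exact Set.union_subset ((hB i).trans hD) hQD
    · exact (hB i).trans hD
  · intro i
    dsimp only
    split_ifs with hsi
    · refine ⟨⟨s, Or.inl hsi⟩, fun P hP hcl => ?_⟩
      have hQP : (∃ u ∈ Q, u ∈ P) → ∀ v ∈ Q, v ∈ P := fun h => hQ.2 P h
        fun u hu hp v hv => hcl u (Or.inr hu) hp v (Or.inr hv)
      have hsQ : s ∈ P → ∀ v ∈ Q, v ∈ P := fun h =>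
        hQP ⟨q₀, hq₀, hcl s (Or.inl hsi) h q₀ (Or.inr hq₀) hsq₀⟩
      have hQs : (∃ u ∈ Q, u ∈ P) → s ∈ P := fun h =>
        hcl q₀ (Or.inr hq₀) (hQP h q₀ hq₀) s (Or.inl hsi) hsq₀.symm
      have hBP : (∃ u ∈ B i, u ∈ P) → ∀ v ∈ B i, v ∈ P := by
        intro h
        refine (hc i).2 P h ?_
        intro u hu hup v hv huv
        by_cases hus : u = s
        · subst hus
          rcases h2 v (hB i hv) huv with h | ⟨q, hq, hqv⟩
          · exact hcl u (Or.inl hu) hup v (Or.inl hv) h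
          · exact hcl q (Or.inr hq) (hsQ hup q hq) v (Or.inl hv) hqv
        · by_cases hvs : v = s
          · subst hvs
            rcases h2 u (hB i hu) huv.symm with h | ⟨q, hq, hqv⟩
            · exact hcl u (Or.inl hu) hup v (Or.inl hv) h.symm
            · exact hQs ⟨q, hq, hcl u (Or.inl hu) hup q (Or.inr hq) hqv.symm⟩
          · exact hcl u (Or.inl hu) hup v (Or.inl hv)
              (h1 u (hB i hu) v (hB i hv) hus hvs huv)
      have hsP : s ∈ P := by
        obtain ⟨u, hu | hu, huP⟩ := hP
        · exact hBP ⟨u, hu, huP⟩ s hsi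
        · exact hQs ⟨u, hu, huP⟩
      rintro v (hv | hv)
      · exact hBP ⟨s, hsi, hsP⟩ v hv
      · exact hsQ hsP v hv
    · refine ⟨(hc i).1, fun P hP hcl => (hc i).2 P hP ?_⟩
      intro u hu hup v hv huv
      refine hcl u hu hup v hv (h1 u (hB i hu) v (hB i hv) ?_ ?_ huv)
      · rintro rfl; exact hsi hu
      · rintro rfl; exact hsi hv
  · intro i j hij
    dsimp only
    have := hd i j hij
    split_ifs with hi hj hj
    · exact absurd hj (Set.disjoint_left.1 this hi)
    · exact Set.disjoint_union_left.2 ⟨this, (hBQ j).symm⟩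
    · exact Set.disjoint_union_right.2 ⟨this, hBQ i⟩
    · exact this
  · intro i j hij
    obtain ⟨u, hu, v, hv, huv⟩ := hl i j hij
    dsimp only
    by_cases hus : u = s
    · subst hus
      rcases h2 v (hB j hv) huv with h | ⟨q, hq, hqv⟩
      · exact ⟨u, hsub i hu, v, hsub j hv, h⟩
      · exact ⟨q, by simp [hu, hq], v, hsub j hv, hqv⟩
    · by_cases hvs : v = s
      · subst hvs
        rcases h2 u (hB i hu) huv.symm with h | ⟨q, hq, hqv⟩
        · exact ⟨u, hsub i hu, v, hsub j hv, h.symm⟩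
        · exact ⟨u, hsub i hu, q, by simp [hv, hq], hqv.symm⟩
      · exact ⟨u, hsub i hu, v, hsub j hv, h1 u (hB i hu) v (hB j hv) hus hvs huv⟩

/-! ### Cycles -/

/-- `f` runs periodically around a cycle of length `n` of `H`. -/
structure IsCyc (H : SimpleGraph V) (f : ℕ → V) (n : ℕ) : Prop where
  three_le : 3 ≤ n
  adj : ∀ k, H.Adj (f k) (f (k + 1))
  per : ∀ k, f (k + n) = f k
  inj : ∀ i < n, ∀ j < n, f i = f j → i = j

theorem IsCyc.map_mod {H : SimpleGraph V} {f : ℕ → V} {n : ℕ} (h : IsCyc H f n) (k : ℕ) :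
    f (k % n) = f k :=
  Function.Periodic.map_mod_nat (f := f) h.per k

theorem IsCyc.rotate {H : SimpleGraph V} {f : ℕ → V} {n : ℕ} (h : IsCyc H f n) (m : ℕ) :
    IsCyc H (fun k => f (k + m)) n where
  three_le := h.three_le
  adj k := by
    have := h.adj (k + m)
    rwa [show k + m + 1 = k + 1 + m by omega] at this
  per k := by
    have := h.per (k + m)
    rwa [show k + m + n = k + n + m by omega] at this
  inj i hi j hj hij := by
    have hn : 0 < n := by have := h.three_le; omega
    have h1 : (i + m) % n = (j + m) % n := by
      apply h.inj _ (Nat.mod_lt _ hn) _ (Nat.mod_lt _ hn)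
      rw [h.map_mod, h.map_mod]; exact hij
    have h2 : i ≡ j [MOD n] := Nat.ModEq.add_right_cancel' m h1
    rwa [Nat.ModEq, Nat.mod_eq_of_lt hi, Nat.mod_eq_of_lt hj] at h2

theorem IsCyc.conn_arc {H : SimpleGraph V} {f : ℕ → V} {n : ℕ} (h : IsCyc H f n) (i d : ℕ) :
    Conn H (f '' Set.Icc i (i + d)) := by
  induction d with
  | zero => simpa using Conn.singleton H (f i)
  | succ d ih =>
    have : f '' Set.Icc i (i + (d + 1)) = f '' Set.Icc i (i + d) ∪ {f (i + d + 1)} := by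
      ext v
      simp only [Set.mem_image, Set.mem_Icc, Set.mem_union, Set.mem_singleton_iff]
      constructor
      · rintro ⟨k, hk, rfl⟩
        by_cases hk' : k = i + d + 1
        · right; rw [hk']
        · left; exact ⟨k, by omega, rfl⟩
      · rintro (⟨k, hk, rfl⟩ | rfl)
        · exact ⟨k, by omega, rfl⟩
        · exact ⟨i + d + 1, by omega, rfl⟩
    rw [this]
    exact ih.union (Conn.singleton _ _) ⟨f (i + d), ⟨i + d, by simp, rfl⟩, _, rfl, h.adj _⟩

theorem IsCyc.conn_Icc {H : SimpleGraph V} {f : ℕ → V} {n : ℕ} (h : IsCyc H f n) {i j : ℕ}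
    (hij : i ≤ j) : Conn H (f '' Set.Icc i j) := by
  obtain ⟨d, rfl⟩ := Nat.exists_eq_add_of_le hij
  exact h.conn_arc i d

theorem IsCyc.disjoint_Icc {H : SimpleGraph V} {f : ℕ → V} {n : ℕ} (h : IsCyc H f n)
    {i j k l : ℕ} (hjk : j < k) (hl : l < n) :
    Disjoint (f '' Set.Icc i j) (f '' Set.Icc k l) := by
  rw [Set.disjoint_left]
  rintro _ ⟨p, hp, rfl⟩ ⟨q, hq, hqp⟩
  simp only [Set.mem_Icc] at hp hq
  have := h.inj q (by omega) p (by omega) hqp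
  omega

/-- A nonempty finite graph of minimum degree at least two contains a cycle. -/
theorem exists_cyc (H : SimpleGraph V) (S : Finset V) (hS : S.Nonempty)
    (h : ∀ v ∈ S, ∀ u, ∃ w ∈ S, H.Adj v w ∧ w ≠ u) :
    ∃ f n, IsCyc H f n ∧ ∀ k, f k ∈ S := by
  classical
  obtain ⟨v₀, hv₀⟩ := hS
  -- an infinite walk in `S` that never turns back along the edge it came from
  have hstep : ∀ p : {p : V × V // p.2 ∈ S}, ∃ w, w ∈ S ∧ H.Adj p.1.2 w ∧ w ≠ p.1.1 :=
    fun p => h p.1.2 p.2 p.1.1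
  choose nx hnx using hstep
  let st : ℕ → {p : V × V // p.2 ∈ S} := fun k =>
    Nat.rec ⟨(v₀, v₀), hv₀⟩ (fun _ p => ⟨(p.1.2, nx p), (hnx p).1⟩) k
  let g : ℕ → V := fun k => (st k).1.2
  have hgS : ∀ k, g k ∈ S := fun k => (st k).2
  have hg1 : ∀ k, H.Adj (g k) (g (k + 1)) := fun k => (hnx (st k)).2.1
  have hg2 : ∀ k, g (k + 2) ≠ g k := fun k => (hnx (st (k + 1))).2.2
  have hex : ∃ d, 0 < d ∧ ∃ i, g i = g (i + d) := by
    obtain ⟨i, j, hij, he⟩ := Finite.exists_ne_map_eq_of_infinite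
      (fun k : ℕ => (⟨g k, hgS k⟩ : S))
    have he : g i = g j := congrArg Subtype.val he
    rcases lt_or_gt_of_ne hij with h | h
    · exact ⟨j - i, by omega, i, by rw [he]; congr 1; omega⟩
    · exact ⟨i - j, by omega, j, by rw [← he]; congr 1; omega⟩
  let n := Nat.find hex
  obtain ⟨hn0, i, hi⟩ : 0 < n ∧ ∃ i, g i = g (i + n) := Nat.find_spec hex
  have hmin : ∀ d, 0 < d → d < n → ∀ i, g i ≠ g (i + d) := fun d hd hdn i he =>
    Nat.find_min hex hdn ⟨hd, i, he⟩
  have hn1 : n ≠ 1 := by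
    intro h1
    rw [h1] at hi
    have := hg1 i
    rw [← hi] at this
    exact H.irrefl this
  have hn2 : n ≠ 2 := by
    intro h1
    rw [h1] at hi
    exact hg2 i hi.symm
  have hinj : ∀ a < n, ∀ b < n, a < b → g (i + a) ≠ g (i + b) := by
    intro a ha b hb hab he
    refine hmin (b - a) (by omega) (by omega) (i + a) ?_
    rw [he]; congr 1; omega
  refine ⟨fun k => g (i + k % n), n, ⟨by omega, fun k => ?_, fun k => by simp, ?_⟩,
    fun k => hgS _⟩
  · have hlt := Nat.mod_lt k hn0
    by_cases hk : k % n + 1 = n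
    · have h0 : (k + 1) % n = 0 := by
        rw [Nat.add_mod, Nat.mod_eq_of_lt (show 1 < n by omega), hk, Nat.mod_self]
      have := hg1 (i + k % n)
      rw [show i + k % n + 1 = i + n by omega, ← hi] at this
      simpa [h0] using this
    · have h0 : (k + 1) % n = k % n + 1 := by
        rw [Nat.add_mod, Nat.mod_eq_of_lt (show 1 < n by omega), Nat.mod_eq_of_lt (by omega)]
      have := hg1 (i + k % n)
      simpa [h0, add_assoc] using this
  · intro a ha b hb he
    simp only [Nat.mod_eq_of_lt ha, Nat.mod_eq_of_lt hb] at he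
    rcases lt_trichotomy a b with h | h | h
    · exact absurd he (hinj a ha b hb h)
    · exact h
    · exact absurd he.symm (hinj b hb a ha h)

/-! ### A cycle in the neighbourhood of the apex -/

/-- If `H[U ∪ {a}]` has no `K₅`-minor and no two vertices of `N` separate `H[U]`, then a cycle in
the neighbourhood `N` of `a` contains all of `N`: a component off the cycle has three attachments
on it, and together with `a` and the three resulting arcs it forms a `K₅`-minor. -/
theorem IsCyc.covers {H : SimpleGraph V} {a : V} {U : Finset V} {f : ℕ → V} {n : ℕ}
    (haU : a ∉ U) (hK : ¬ K5In H (insert a (U : Set V)))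
    (hNC : ∀ T : Finset V, T ⊆ U → (∀ t ∈ T, H.Adj a t) → T.card ≤ 2 →
      ∀ C : Set V, C.Nonempty → (∀ c ∈ C, c ∈ U ∧ c ∉ T) →
      (∀ c ∈ C, ∀ q ∈ U, q ∉ T → H.Adj c q → q ∈ C) → ∀ q ∈ U, q ∉ T → q ∈ C)
    (hf : IsCyc H f n) (hfU : ∀ k, f k ∈ U) (hfa : ∀ k, H.Adj a (f k))
    {w : V} (hwU : w ∈ U) (hwa : H.Adj a w) : ∃ k, f k = w := by
  classical
  by_contra hw
  have hn := hf.three_le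
  obtain ⟨C, hCZ, hwC, hC, hcl⟩ := exists_component H {z | z ∈ U ∧ ∀ k, f k ≠ z}
    (w := w) ⟨hwU, fun k hk => hw ⟨k, hk⟩⟩
  let At : Finset ℕ := (Finset.range n).filter fun i => ∃ c ∈ C, H.Adj c (f i)
  have h3 : ∀ i j k, i < j → j < k → i ∈ At → j ∈ At → k ∈ At → False := by
    intro i j k hij hjk hi hj hk
    simp only [At, Finset.mem_filter, Finset.mem_range] at hi hj hk
    apply hK
    have hsub : ∀ S : Set ℕ, f '' S ⊆ insert a (U : Set V) := by
      rintro S _ ⟨p, -, rfl⟩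
      exact Or.inr (hfU p)
    have hda : ∀ S : Set V, S ⊆ U → Disjoint {a} S := by
      intro S hS
      rw [Set.disjoint_singleton_left]
      exact fun h => haU (hS h)
    have hfS : ∀ S : Set ℕ, f '' S ⊆ (U : Set V) := by
      rintro S _ ⟨p, -, rfl⟩
      exact hfU p
    have hdC : ∀ S : Set ℕ, Disjoint C (f '' S) := by
      intro S
      rw [Set.disjoint_left]
      rintro _ h ⟨p, -, rfl⟩
      exact (hCZ h).2 p rfl
    have hla : ∀ i j : ℕ, i ≤ j → Linked H {a} (f '' Set.Icc i j) := fun i j hij =>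
      ⟨a, rfl, f i, ⟨i, ⟨le_rfl, hij⟩, rfl⟩, hfa i⟩
    have hlC : ∀ i j k : ℕ, i ≤ j → j ≤ k → (∃ c ∈ C, H.Adj c (f j)) →
        Linked H C (f '' Set.Icc i k) := by
      rintro i j k hij hjk ⟨c, hc, hcj⟩
      exact ⟨c, hc, f j, ⟨j, ⟨hij, hjk⟩, rfl⟩, hcj⟩
    refine K5In.mk5 (A₀ := {a}) (A₁ := C) (A₂ := f '' Set.Icc 0 i)
      (A₃ := f '' Set.Icc (i + 1) j) (A₄ := f '' Set.Icc (j + 1) (n - 1))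
      (by simp) (fun z hz => Or.inr (hCZ hz).1) (hsub _) (hsub _) (hsub _)
      (Conn.singleton _ _) hC (hf.conn_Icc (by omega)) (hf.conn_Icc (by omega))
      (hf.conn_Icc (by omega))
      (hda _ fun z hz => (hCZ hz).1) (hda _ (hfS _)) (hda _ (hfS _)) (hda _ (hfS _))
      (hdC _) (hdC _) (hdC _)
      (hf.disjoint_Icc (by omega) (by omega)) (hf.disjoint_Icc (by omega) (by omega))
      (hf.disjoint_Icc (by omega) (by omega))
      ⟨a, rfl, w, hwC, hwa⟩ (hla _ _ (by omega)) (hla _ _ (by omega)) (hla _ _ (by omega))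
      (hlC _ i _ (by omega) (by omega) hi.2) (hlC _ j _ (by omega) (by omega) hj.2)
      (hlC _ k _ (by omega) (by omega) hk.2)
      ⟨f i, ⟨i, by simp, rfl⟩, f (i + 1), ⟨i + 1, ⟨by omega, by omega⟩, rfl⟩, hf.adj i⟩
      ⟨f 0, ⟨0, by simp, rfl⟩, f (n - 1), ⟨n - 1, ⟨by omega, by omega⟩, rfl⟩, ?_⟩
      ⟨f j, ⟨j, ⟨by omega, by omega⟩, rfl⟩, f (j + 1), ⟨j + 1, ⟨by omega, by omega⟩, rfl⟩,
        hf.adj j⟩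
    have h1 := hf.adj (n - 1)
    have h2 := hf.per 0
    rw [show n - 1 + 1 = 0 + n by omega, h2] at h1
    exact h1.symm
  have hcard : At.card ≤ 2 := by
    by_contra hcon
    obtain ⟨i, j, k, hi, hj, hk, hij, hik, hjk⟩ := Finset.two_lt_card_iff.1 (not_le.1 hcon)
    rcases lt_or_gt_of_ne hij with h1 | h1 <;> rcases lt_or_gt_of_ne hik with h2 | h2 <;>
      rcases lt_or_gt_of_ne hjk with h3' | h3' <;>
      first
      | omega
      | exact h3 _ _ _ h1 h3' hi hj hk
      | exact h3 _ _ _ h2 h3' hi hk hj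
      | exact h3 _ _ _ h1 h2 hj hi hk
      | exact h3 _ _ _ h3' h2 hj hk hi
      | exact h3 _ _ _ h2 h1 hk hi hj
      | exact h3 _ _ _ h3' h1 hk hj hi
  let T : Finset V := At.image f
  have hTc : T.card ≤ 2 := Finset.card_image_le.trans hcard
  have hmemT : ∀ q, q ∈ T → ∃ k, f k = q := by
    intro q hq
    obtain ⟨k, -, hk⟩ := Finset.mem_image.1 hq
    exact ⟨k, hk⟩
  have key := hNC T (fun q hq => by obtain ⟨k, rfl⟩ := hmemT q hq; exact hfU k)
    (fun q hq => by obtain ⟨k, rfl⟩ := hmemT q hq; exact hfa k) hTc C ⟨w, hwC⟩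
    (fun c hc => ⟨(hCZ hc).1, fun hT => by
      obtain ⟨k, rfl⟩ := hmemT c hT
      exact (hCZ hc).2 k rfl⟩)
    (fun c hc q hqU hqT hcq => by
      refine hcl c hc q ⟨hqU, ?_⟩ hcq
      rintro k rfl
      apply hqT
      refine Finset.mem_image.2 ⟨k % n, ?_, hf.map_mod k⟩
      simp only [At, Finset.mem_filter, Finset.mem_range]
      refine ⟨Nat.mod_lt _ (by omega), c, hc, ?_⟩
      rw [hf.map_mod]; exact hcq)
  -- at most two of the `n ≥ 3` vertices of the cycle lie in `T`
  have hAt : ∃ i ∈ Finset.range n, i ∉ At := by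
    by_contra hcon
    push Not at hcon
    have := Finset.card_le_card (show Finset.range n ⊆ At from hcon)
    rw [Finset.card_range] at this
    omega
  obtain ⟨i, hi, hiAt⟩ := hAt
  have hiT : f i ∉ T := by
    intro h
    obtain ⟨j, hj, hji⟩ := Finset.mem_image.1 h
    have hjn : j < n := by
      simp only [At, Finset.mem_filter, Finset.mem_range] at hj
      exact hj.1
    have := hf.inj j hjn i (Finset.mem_range.1 hi) hji
    exact hiAt (this ▸ hj)
  exact (hCZ (key (f i) (hfU i) hiT)).2 i rfl

/-- Under the hypotheses of `IsCyc.covers`, a cycle in the neighbourhood of `a` is chordless: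
a chord together with a connection between the two arcs it cuts off would give four pairwise
linked branch sets, each meeting the neighbourhood of `a`. -/
theorem IsCyc.chordless {H : SimpleGraph V} {a : V} {U : Finset V} {f : ℕ → V} {n : ℕ}
    (haU : a ∉ U) (hK : ¬ K5In H (insert a (U : Set V)))
    (hNC : ∀ T : Finset V, T ⊆ U → (∀ t ∈ T, H.Adj a t) → T.card ≤ 2 →
      ∀ C : Set V, C.Nonempty → (∀ c ∈ C, c ∈ U ∧ c ∉ T) →
      (∀ c ∈ C, ∀ q ∈ U, q ∉ T → H.Adj c q → q ∈ C) → ∀ q ∈ U, q ∉ T → q ∈ C)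
    (hf : IsCyc H f n) (hfU : ∀ k, f k ∈ U) (hfa : ∀ k, H.Adj a (f k))
    {k : ℕ} (h0k : H.Adj (f 0) (f k)) : f k = f 1 ∨ f k = f (n - 1) := by
  classical
  have hn := hf.three_le
  wlog hkn : k < n generalizing k
  · have := this (k := k % n) (by rwa [hf.map_mod]) (Nat.mod_lt _ (by omega))
    rwa [hf.map_mod] at this
  by_contra hcon
  rw [not_or] at hcon
  have hk0 : k ≠ 0 := by rintro rfl; exact H.irrefl h0k
  have hk1 : k ≠ 1 := by rintro rfl; exact hcon.1 rfl
  have hk2 : k ≠ n - 1 := by rintro rfl; exact hcon.2 rfl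
  have hinj : ∀ i < n, ∀ j < n, i ≠ j → f i ≠ f j := fun i hi j hj hij he =>
    hij (hf.inj i hi j hj he)
  obtain ⟨C, hCZ, h1C, hC, hcl⟩ := exists_component H
    {z | z ∈ U ∧ f 0 ≠ z ∧ ∀ j, k ≤ j → j < n → f j ≠ z}
    (w := f 1) ⟨hfU 1, hinj _ (by omega) _ (by omega) (by omega),
      fun j hkj hjn => hinj _ (by omega) _ (by omega) (by omega)⟩
  have hCarc : ∀ i, 1 + i < k → f (1 + i) ∈ C := by
    intro i
    induction i with
    | zero => intro _; exact h1C
    | succ i ih =>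
      intro hi
      exact hcl _ (ih (by omega)) _ ⟨hfU _, hinj _ (by omega) _ (by omega) (by omega),
        fun j hkj hjn => hinj _ (by omega) _ (by omega) (by omega)⟩ (hf.adj (1 + i))
  have hCk : f (k - 1) ∈ C := by
    have := hCarc (k - 2) (by omega)
    rwa [show 1 + (k - 2) = k - 1 by omega] at this
  have hj : ∃ j, k < j ∧ j < n ∧ ∃ c ∈ C, H.Adj c (f j) := by
    by_contra hno
    push Not at hno
    have hTmem : ∀ t ∈ ({f 0, f k} : Finset V), ∃ i, f i = t := by
      intro t ht
      simp only [Finset.mem_insert, Finset.mem_singleton] at ht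
      rcases ht with rfl | rfl
      exacts [⟨0, rfl⟩, ⟨k, rfl⟩]
    have key := hNC {f 0, f k} (fun t ht => by obtain ⟨i, rfl⟩ := hTmem t ht; exact hfU i)
      (fun t ht => by obtain ⟨i, rfl⟩ := hTmem t ht; exact hfa i) Finset.card_le_two C ⟨_, h1C⟩
      (fun c hc => ⟨(hCZ hc).1, fun ht => by
        simp only [Finset.mem_insert, Finset.mem_singleton] at ht
        rcases ht with rfl | rfl
        · exact (hCZ hc).2.1 rfl
        · exact (hCZ hc).2.2 k le_rfl hkn rfl⟩)
      (fun c hc q hqU hqT hcq => by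
        simp only [Finset.mem_insert, Finset.mem_singleton, not_or] at hqT
        refine hcl c hc q ⟨hqU, fun h => hqT.1 h.symm, ?_⟩ hcq
        rintro j hkj hjn rfl
        rcases hkj.lt_or_eq with h | h
        · exact hno j h hjn c hc hcq
        · exact hqT.2 (by rw [h]))
      (f (n - 1)) (hfU _) (by
        simp only [Finset.mem_insert, Finset.mem_singleton, not_or]
        exact ⟨hinj _ (by omega) _ (by omega) (by omega),
          hinj _ (by omega) _ (by omega) (by omega)⟩)
    exact (hCZ key).2.2 (n - 1) (by omega) (by omega) rfl
  obtain ⟨j, hkj, hjn, c, hcC, hcj⟩ := hj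
  apply hK
  have hsub : ∀ S : Set ℕ, f '' S ⊆ insert a (U : Set V) := by
    rintro S _ ⟨p, -, rfl⟩
    exact Or.inr (hfU p)
  have hda : ∀ S : Set V, S ⊆ U → Disjoint {a} S := by
    intro S hS
    rw [Set.disjoint_singleton_left]
    exact fun h => haU (hS h)
  have hfS : ∀ S : Set ℕ, f '' S ⊆ (U : Set V) := by
    rintro S _ ⟨p, -, rfl⟩
    exact hfU p
  have hd0 : ∀ i l : ℕ, 0 < i → l < n → Disjoint {f 0} (f '' Set.Icc i l) := by
    intro i l hi hl
    have := hf.disjoint_Icc (i := 0) (j := 0) hi hl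
    simpa using this
  have hdC : ∀ i l : ℕ, k ≤ i → l < n → Disjoint C (f '' Set.Icc i l) := by
    intro i l hi hl
    rw [Set.disjoint_left]
    rintro _ h ⟨p, hp, rfl⟩
    simp only [Set.mem_Icc] at hp
    exact (hCZ h).2.2 p (by omega) (by omega) rfl
  have hla : ∀ i j : ℕ, i ≤ j → Linked H {a} (f '' Set.Icc i j) := fun i j hij =>
    ⟨a, rfl, f i, ⟨i, ⟨le_rfl, hij⟩, rfl⟩, hfa i⟩
  have hlast : H.Adj (f 0) (f (n - 1)) := by
    have h1 := hf.adj (n - 1)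
    have h2 := hf.per 0
    rw [show n - 1 + 1 = 0 + n by omega, h2] at h1
    exact h1.symm
  refine K5In.mk5 (A₀ := {a}) (A₁ := {f 0}) (A₂ := C) (A₃ := f '' Set.Icc k (j - 1))
    (A₄ := f '' Set.Icc j (n - 1))
    (by simp) (by simpa using Or.inr (hfU 0)) (fun z hz => Or.inr (hCZ hz).1) (hsub _) (hsub _)
    (Conn.singleton _ _) (Conn.singleton _ _) hC (hf.conn_Icc (by omega))
    (hf.conn_Icc (by omega))
    (hda _ (by simpa using hfU 0)) (hda _ fun z hz => (hCZ hz).1) (hda _ (hfS _)) (hda _ (hfS _))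
    (by rw [Set.disjoint_singleton_left]; exact fun h => (hCZ h).2.1 rfl)
    (hd0 _ _ (by omega) (by omega)) (hd0 _ _ (by omega) (by omega))
    (hdC _ _ (by omega) (by omega)) (hdC _ _ (by omega) (by omega))
    (hf.disjoint_Icc (by omega) (by omega))
    ⟨a, rfl, f 0, rfl, hfa 0⟩ ⟨a, rfl, f 1, h1C, hfa 1⟩ (hla _ _ (by omega)) (hla _ _ (by omega))
    ⟨f 0, rfl, f 1, h1C, hf.adj 0⟩ ⟨f 0, rfl, f k, ⟨k, ⟨by omega, by omega⟩, rfl⟩, h0k⟩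
    ⟨f 0, rfl, f (n - 1), ⟨n - 1, ⟨by omega, by omega⟩, rfl⟩, hlast⟩
    ⟨f (k - 1), hCk, f k, ⟨k, ⟨by omega, by omega⟩, rfl⟩, ?_⟩
    ⟨c, hcC, f j, ⟨j, ⟨by omega, by omega⟩, rfl⟩, hcj⟩
    ⟨f (j - 1), ⟨j - 1, ⟨by omega, by omega⟩, rfl⟩, f j, ⟨j, ⟨by omega, by omega⟩, rfl⟩, ?_⟩
  · have := hf.adj (k - 1)
    rwa [show k - 1 + 1 = k by omega] at this
  · have := hf.adj (j - 1)
    rwa [show j - 1 + 1 = j by omega] at this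

/-! ### Instances and their reductions -/

/-- An instance of the colouring problem: the vertices of `U` are to be coloured, `a ∉ U` is an
uncoloured apex with `H[U ∪ {a}]` free of `K₅`-minors, `X` is a clique of at most two neighbours
of `a` precoloured by `ψ`, and the lists have size at least three on the neighbours of `a` and at
least five elsewhere. The neighbours of `a` play the part of the outer cycle in Thomassen's theorem
on planar graphs. -/
structure Inst (H : SimpleGraph V) (a : V) (U : Finset V) (L : V → Finset ℕ) (X : Finset V)
    (ψ : V → ℕ) : Prop where
  apex : a ∉ U
  free : ¬ K5In H (insert a (U : Set V))
  sub : X ⊆ U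
  adj : ∀ x ∈ X, H.Adj a x
  card : X.card ≤ 2
  clique : ∀ x ∈ X, ∀ y ∈ X, x ≠ y → H.Adj x y ∧ ψ x ≠ ψ y
  three : ∀ v ∈ U, v ∉ X → H.Adj a v → 3 ≤ (L v).card
  five : ∀ v ∈ U, v ∉ X → ¬ H.Adj a v → 5 ≤ (L v).card

/-- `φ` is a proper colouring of `H[U]` that extends `ψ` on `X` and uses the lists off `X`. -/
def Sol (H : SimpleGraph V) (U : Finset V) (L : V → Finset ℕ) (X : Finset V)
    (ψ φ : V → ℕ) : Prop :=
  (∀ v ∈ U, v ∉ X → φ v ∈ L v) ∧ (∀ x ∈ X, φ x = ψ x) ∧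
    ∀ u ∈ U, ∀ v ∈ U, H.Adj u v → φ u ≠ φ v

/-- Every instance with fewer than `n` vertices to colour has a solution. -/
def SolvableBelow (V : Type*) (n : ℕ) : Prop :=
  ∀ (H : SimpleGraph V) (a : V) (U : Finset V) (L : V → Finset ℕ) (X : Finset V) (ψ : V → ℕ),
    U.card < n → Inst H a U L X ψ → ∃ φ, Sol H U L X ψ φ

/-- If every neighbour of `a` in `U` is precoloured, a precoloured vertex `x` can serve as the new
apex: the remaining lists have size at least five and lose at most the colour of `x`. -/
theorem sol_of_subset {H : SimpleGraph V} {a x : V} {U : Finset V} {L : V → Finset ℕ}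
    {X : Finset V} {ψ : V → ℕ} (hIH : SolvableBelow V U.card)
    (hfree : ¬ K5In H (insert a (U : Set V)))
    (hXU : X ⊆ U) (hXc : X.card ≤ 2)
    (hX : ∀ x ∈ X, ∀ y ∈ X, x ≠ y → H.Adj x y ∧ ψ x ≠ ψ y)
    (h5 : ∀ v ∈ U, v ∉ X → 5 ≤ (L v).card) (hx : x ∈ X) :
    ∃ φ, Sol H U L X ψ φ := by
  classical
  have hxU := hXU hx
  obtain ⟨φ, h1, h2, h3⟩ := hIH H x (U.erase x) (fun w => if H.Adj x w then (L w).erase (ψ x)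
    else L w) (X.erase x) ψ (Finset.card_erase_lt_of_mem hxU)
    { apex := by simp
      free := fun h => hfree (h.mono (by
        intro z hz
        rcases hz with rfl | hz
        · exact Or.inr hxU
        · exact Or.inr (Finset.mem_of_mem_erase hz)))
      sub := Finset.erase_subset_erase x hXU
      adj := fun y hy => (hX x hx y (Finset.mem_of_mem_erase hy) (Finset.ne_of_mem_erase hy).symm).1
      card := (Finset.card_le_card (Finset.erase_subset _ _)).trans hXc
      clique := fun y hy z hz hyz =>
        hX y (Finset.mem_of_mem_erase hy) z (Finset.mem_of_mem_erase hz) hyz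
      three := fun v hv hvX hav => by
        simp only [Finset.mem_erase, not_and] at hv hvX
        have := h5 v hv.2 (hvX hv.1)
        rw [if_pos hav]
        have := Finset.pred_card_le_card_erase (s := L v) (a := ψ x)
        omega
      five := fun v hv hvX hav => by
        simp only [Finset.mem_erase, not_and] at hv hvX
        rw [if_neg hav]
        exact h5 v hv.2 (hvX hv.1) }
  have hprop : ∀ v ∈ U, v ≠ x → H.Adj x v → φ v ≠ ψ x := by
    intro v hv hvx hxv
    by_cases hvX : v ∈ X
    · rw [h2 v (Finset.mem_erase.2 ⟨hvx, hvX⟩)]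
      exact (hX v hvX x hx hvx).2
    · have := h1 v (Finset.mem_erase.2 ⟨hvx, hv⟩) (fun h => hvX (Finset.mem_of_mem_erase h))
      dsimp only at this
      rw [if_pos hxv] at this
      exact Finset.ne_of_mem_erase this
  refine ⟨Function.update φ x (ψ x), ?_, ?_, ?_⟩
  · intro v hv hvX
    have hvx : v ≠ x := by rintro rfl; exact hvX hx
    rw [Function.update_of_ne hvx]
    have := h1 v (Finset.mem_erase.2 ⟨hvx, hv⟩) (fun h => hvX (Finset.mem_of_mem_erase h))
    dsimp only at this
    split_ifs at this
    · exact Finset.mem_of_mem_erase this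
    · exact this
  · intro y hy
    by_cases hyx : y = x
    · rw [hyx, Function.update_self]
    · rw [Function.update_of_ne hyx]
      exact h2 y (Finset.mem_erase.2 ⟨hyx, hy⟩)
  · intro u hu v hv huv
    by_cases hux : u = x
    · subst hux
      rw [Function.update_self, Function.update_of_ne huv.ne']
      exact (hprop v hv huv.ne' huv).symm
    · by_cases hvx : v = x
      · subst hvx
        rw [Function.update_self, Function.update_of_ne hux]
        exact hprop u hu hux huv.symm
      · rw [Function.update_of_ne hux, Function.update_of_ne hvx]
        exact h3 u (Finset.mem_erase.2 ⟨hux, hu⟩) v (Finset.mem_erase.2 ⟨hvx, hv⟩) huv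

/-- Colourings are glued along a set `T` of at most two neighbours of `a` that separates `A` from
`B`. In `H'` the set `T` is made complete, so that the colours received by `T` on the side of `A`
form an admissible precolouring on the side of `B`. -/
theorem sol_of_sep {H H' : SimpleGraph V} {a : V} {U : Finset V} {L : V → Finset ℕ}
    {X : Finset V} {ψ : V → ℕ} (hIH : SolvableBelow V U.card) (hI : Inst H a U L X ψ)
    {T A B : Finset V} (hTU : T ⊆ U) (hTa : ∀ t ∈ T, H.Adj a t) (hTc : T.card ≤ 2)
    (hA : ∀ v ∈ A, v ∈ U ∧ v ∉ T) (hB : ∀ v ∈ B, v ∈ U ∧ v ∉ T ∧ v ∉ A)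
    (hU : ∀ v ∈ U, v ∈ T ∨ v ∈ A ∨ v ∈ B)
    (hAB : ∀ u ∈ A, ∀ v ∈ B, ¬ H.Adj u v) (hAn : A.Nonempty) (hBn : B.Nonempty)
    (hHH' : ∀ u v, H.Adj u v → H'.Adj u v)
    (hH'H : ∀ u v, H'.Adj u v → H.Adj u v ∨ (u ∈ T ∧ v ∈ T))
    (hT : ∀ u ∈ T, ∀ v ∈ T, u ≠ v → H'.Adj u v)
    (hKA : ¬ K5In H' (insert a {v | v ∈ A ∨ v ∈ T}))
    (hKB : ¬ K5In H' (insert a {v | v ∈ B ∨ v ∈ T}))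
    (hX : ∀ x ∈ X, x ∈ A ∨ x ∈ T) : ∃ φ, Sol H U L X ψ φ := by
  classical
  have haT : a ∉ T := fun h => hI.apex (hTU h)
  have hadj : ∀ v, H'.Adj a v ↔ H.Adj a v := fun v =>
    ⟨fun h => (hH'H a v h).resolve_right fun h => haT h.1, hHH' a v⟩
  have hAU : A ∪ T ⊆ U := Finset.union_subset (fun v hv => (hA v hv).1) hTU
  have hBU : B ∪ T ⊆ U := Finset.union_subset (fun v hv => (hB v hv).1) hTU
  have hAlt : (A ∪ T).card < U.card := by
    obtain ⟨b, hb⟩ := hBn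
    refine Finset.card_lt_card (Finset.ssubset_iff_subset_ne.2 ⟨hAU, fun h => ?_⟩)
    have := (hB b hb).1
    rw [← h, Finset.mem_union] at this
    exact this.elim (hB b hb).2.2 (hB b hb).2.1
  have hBlt : (B ∪ T).card < U.card := by
    obtain ⟨b, hb⟩ := hAn
    refine Finset.card_lt_card (Finset.ssubset_iff_subset_ne.2 ⟨hBU, fun h => ?_⟩)
    have := (hA b hb).1
    rw [← h, Finset.mem_union] at this
    exact this.elim (fun h => (hB b h).2.2 hb) (hA b hb).2
  obtain ⟨φ₁, f1, f2, f3⟩ := hIH H' a (A ∪ T) L X ψ hAlt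
    { apex := fun h => hI.apex (hAU h)
      free := fun h => hKA (by convert h using 2; ext; simp)
      sub := fun x hx => Finset.mem_union.2 (hX x hx)
      adj := fun x hx => hHH' _ _ (hI.adj x hx)
      card := hI.card
      clique := fun x hx y hy hxy => ⟨hHH' _ _ (hI.clique x hx y hy hxy).1,
        (hI.clique x hx y hy hxy).2⟩
      three := fun v hv hvX h => hI.three v (hAU hv) hvX ((hadj v).1 h)
      five := fun v hv hvX h => hI.five v (hAU hv) hvX (fun h' => h ((hadj v).2 h')) }
  have hXBT : ∀ v ∈ B, v ∉ X := fun v hv hvX =>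
    (hX v hvX).elim (hB v hv).2.2 (hB v hv).2.1
  obtain ⟨φ₂, g1, g2, g3⟩ := hIH H' a (B ∪ T) L T φ₁ hBlt
    { apex := fun h => hI.apex (hBU h)
      free := fun h => hKB (by convert h using 2; ext; simp)
      sub := Finset.subset_union_right
      adj := fun x hx => hHH' _ _ (hTa x hx)
      card := hTc
      clique := fun x hx y hy hxy => ⟨hT x hx y hy hxy,
        f3 x (Finset.mem_union_right _ hx) y (Finset.mem_union_right _ hy) (hT x hx y hy hxy)⟩
      three := fun v hv hvX h => hI.three v (hBU hv)
        (hXBT v ((Finset.mem_union.1 hv).resolve_right hvX)) ((hadj v).1 h)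
      five := fun v hv hvX h => hI.five v (hBU hv)
        (hXBT v ((Finset.mem_union.1 hv).resolve_right hvX)) (fun h' => h ((hadj v).2 h')) }
  have hmB : ∀ v ∈ U, v ∉ B → v ∈ A ∪ T := fun v hv hvB => by
    rcases hU v hv with h | h | h
    · exact Finset.mem_union_right _ h
    · exact Finset.mem_union_left _ h
    · exact absurd h hvB
  have hTB : ∀ v ∈ T, v ∉ B := fun v hv hvB => (hB v hvB).2.1 hv
  -- an edge leaving `B` ends in `T`, where the two colourings agree
  have hcross : ∀ u ∈ B, ∀ v ∈ U, v ∉ B → H.Adj u v → φ₂ u ≠ φ₁ v := by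
    intro u hu v hv hvB huv
    rcases hU v hv with h | h | h
    · rw [← g2 v h]
      exact g3 u (Finset.mem_union_left _ hu) v (Finset.mem_union_right _ h) (hHH' _ _ huv)
    · exact absurd huv.symm (hAB v h u hu)
    · exact absurd h hvB
  refine ⟨fun v => if v ∈ B then φ₂ v else φ₁ v, ?_, ?_, ?_⟩
  · intro v hv hvX
    dsimp only
    split_ifs with hvB
    · exact g1 v (Finset.mem_union_left _ hvB) fun h => hTB v h hvB
    · exact f1 v (hmB v hv hvB) hvX
  · intro x hx
    dsimp only
    rw [if_neg fun h => hXBT x h hx]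
    exact f2 x hx
  · intro u hu v hv huv
    dsimp only
    split_ifs with h1 h2 h2
    · exact g3 u (Finset.mem_union_left _ h1) v (Finset.mem_union_left _ h2) (hHH' _ _ huv)
    · exact hcross u h1 v hv h2 huv
    · exact (hcross v h2 u hu h1 huv.symm).symm
    · exact f3 u (hmB u hu h1) v (hmB v hv h2) (hHH' _ _ huv)

/-- As `sol_of_sep`, for the separation of `U \ T` into a union `C` of components and its
complement; the precoloured clique may lie on either side. -/
theorem sol_of_closed {H H' : SimpleGraph V} {a : V} {U : Finset V} {L : V → Finset ℕ}
    {X : Finset V} {ψ : V → ℕ} (hIH : SolvableBelow V U.card) (hI : Inst H a U L X ψ)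
    {T : Finset V} (hTU : T ⊆ U) (hTa : ∀ t ∈ T, H.Adj a t) (hTc : T.card ≤ 2)
    {C : Set V} (hCn : C.Nonempty) (hC : ∀ c ∈ C, c ∈ U ∧ c ∉ T)
    (hcl : ∀ c ∈ C, ∀ q ∈ U, q ∉ T → H.Adj c q → q ∈ C)
    {r : V} (hrU : r ∈ U) (hrT : r ∉ T) (hrC : r ∉ C)
    (hHH' : ∀ u v, H.Adj u v → H'.Adj u v)
    (hH'H : ∀ u v, H'.Adj u v → H.Adj u v ∨ (u ∈ T ∧ v ∈ T))
    (hT : ∀ u ∈ T, ∀ v ∈ T, u ≠ v → H'.Adj u v)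
    (hK : ∀ E : Set V, E.Nonempty → (∀ c ∈ E, c ∈ U ∧ c ∉ T) →
      (∀ c ∈ E, ∀ q ∈ U, q ∉ T → H.Adj c q → q ∈ E) →
      (∃ r ∈ U, r ∉ T ∧ r ∉ E) → ¬ K5In H' (insert a {v | v ∈ E ∨ v ∈ T})) :
    ∃ φ, Sol H U L X ψ φ := by
  classical
  let A := U.filter fun v => v ∈ C
  let B := U.filter fun v => v ∉ T ∧ v ∉ C
  have hmA : ∀ v, v ∈ A ↔ v ∈ C := fun v => by
    simp only [A, Finset.mem_filter, and_iff_right_iff_imp]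
    exact fun h => (hC v h).1
  have hmB : ∀ v, v ∈ B ↔ v ∈ U ∧ v ∉ T ∧ v ∉ C := fun v => by simp [B]
  have hAB : ∀ u ∈ A, ∀ v ∈ B, ¬ H.Adj u v := fun u hu v hv huv => by
    rw [hmA] at hu
    rw [hmB] at hv
    exact hv.2.2 (hcl u hu v hv.1 hv.2.1 huv)
  have hA1 : ∀ v ∈ A, v ∈ U ∧ v ∉ T := fun v hv => hC v ((hmA v).1 hv)
  have hB1 : ∀ v ∈ B, v ∈ U ∧ v ∉ T := fun v hv => ⟨((hmB v).1 hv).1, ((hmB v).1 hv).2.1⟩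
  have hdis : ∀ v, v ∈ A → v ∉ B := fun v h h' => ((hmB v).1 h').2.2 ((hmA v).1 h)
  have hU : ∀ v ∈ U, v ∈ T ∨ v ∈ A ∨ v ∈ B := fun v hv => by
    rw [hmA, hmB]; tauto
  have hAn : A.Nonempty := hCn.imp fun c hc => (hmA c).2 hc
  have hBn : B.Nonempty := ⟨r, (hmB r).2 ⟨hrU, hrT, hrC⟩⟩
  have hKA : ¬ K5In H' (insert a {v | v ∈ A ∨ v ∈ T}) :=
    hK {v | v ∈ A} hAn hA1 (fun c hc q hq hqT hcq =>
      (hmA q).2 (hcl c ((hmA c).1 hc) q hq hqT hcq))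
      ⟨r, hrU, hrT, fun h => hrC ((hmA r).1 h)⟩
  have hKB : ¬ K5In H' (insert a {v | v ∈ B ∨ v ∈ T}) := by
    refine hK {v | v ∈ B} hBn hB1 (fun c hc q hq hqT hcq => ?_) ?_
    · refine (hmB q).2 ⟨hq, hqT, fun hqC => ?_⟩
      exact hAB q ((hmA q).2 hqC) c hc hcq.symm
    · obtain ⟨s, hs⟩ := hAn
      exact ⟨s, (hA1 s hs).1, (hA1 s hs).2, hdis s hs⟩
  by_cases hX : ∀ x ∈ X, x ∈ A ∨ x ∈ T
  · exact sol_of_sep hIH hI hTU hTa hTc hA1 (fun v hv => ⟨(hB1 v hv).1, (hB1 v hv).2,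
      fun h => hdis v h hv⟩) hU hAB hAn hBn hHH' hH'H hT hKA hKB hX
  · push Not at hX
    obtain ⟨x, hx, hxA, hxT⟩ := hX
    have hxB : x ∈ B := by
      rcases hU x (hI.sub hx) with h | h | h
      exacts [absurd h hxT, absurd h hxA, h]
    refine sol_of_sep hIH hI hTU hTa hTc hB1 (fun v hv => ⟨(hA1 v hv).1, (hA1 v hv).2,
      hdis v hv⟩) (fun v hv => (hU v hv).imp_right Or.symm)
      (fun u hu v hv huv => hAB v hv u hu huv.symm) hBn hAn hHH' hH'H hT hKB hKA ?_
    intro y hy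
    rcases hU y (hI.sub hy) with h | h | h
    · exact Or.inr h
    · have hyx : y ≠ x := by rintro rfl; exact hxA h
      exact absurd (hI.clique y hy x hx hyx).1 (hAB y h x hxB)
    · exact Or.inl h

/-- In an unsolvable instance whose smaller instances are all solvable, no set of at most two
neighbours of `a` separates `H[U]`. -/
theorem no_sep {H : SimpleGraph V} {a : V} {U : Finset V} {L : V → Finset ℕ}
    {X : Finset V} {ψ : V → ℕ} (hIH : SolvableBelow V U.card) (hI : Inst H a U L X ψ)
    (hno : ¬ ∃ φ, Sol H U L X ψ φ) (T : Finset V) (hTU : T ⊆ U) (hTa : ∀ t ∈ T, H.Adj a t)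
    (hTc : T.card ≤ 2) (C : Set V) (hCn : C.Nonempty) (hC : ∀ c ∈ C, c ∈ U ∧ c ∉ T)
    (hcl : ∀ c ∈ C, ∀ q ∈ U, q ∉ T → H.Adj c q → q ∈ C) : ∀ q ∈ U, q ∉ T → q ∈ C := by
  classical
  have hone : ∀ (T : Finset V), T ⊆ U → (∀ t ∈ T, H.Adj a t) →
      T.card ≤ 1 → ∀ (C : Set V), C.Nonempty → (∀ c ∈ C, c ∈ U ∧ c ∉ T) →
      (∀ c ∈ C, ∀ q ∈ U, q ∉ T → H.Adj c q → q ∈ C) → ∀ q ∈ U, q ∉ T → q ∈ C := by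
    intro T hTU hTa hTc C hCn hC hcl r hrU hrT
    by_contra hrC
    refine hno (sol_of_closed (H' := H) hIH hI hTU hTa (by omega) hCn hC hcl hrU hrT hrC
      (fun _ _ h => h) (fun _ _ h => Or.inl h) (fun u hu v hv huv => ?_) ?_)
    · exact absurd (Finset.card_le_one.1 hTc u hu v hv) huv
    · intro E _ hE _ _ hK
      refine hI.free (hK.mono (Set.insert_subset_insert ?_))
      rintro v (hv | hv)
      exacts [(hE v hv).1, hTU hv]
  rcases Nat.lt_or_ge T.card 2 with hlt | hge
  · exact hone T hTU hTa (by omega) C hCn hC hcl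
  obtain ⟨u, v, huv, rfl⟩ := Finset.card_eq_two.1 (le_antisymm hTc hge)
  have huU : u ∈ U := hTU (by simp)
  have hvU : v ∈ U := hTU (by simp)
  intro r hrU hrT
  by_contra hrC
  have hadj : ∀ p q, (H ⊔ SimpleGraph.edge u v).Adj p q →
      H.Adj p q ∨ (p = u ∧ q = v) ∨ (p = v ∧ q = u) := by
    intro p q h
    rw [SimpleGraph.sup_adj, SimpleGraph.edge_adj] at h
    tauto
  refine hno (sol_of_closed (H' := H ⊔ SimpleGraph.edge u v) hIH hI hTU hTa hTc hCn hC hcl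
    hrU hrT hrC (fun _ _ h => Or.inl h) (fun p q h => ?_) ?_ ?_)
  · rcases hadj p q h with h | ⟨rfl, rfl⟩ | ⟨rfl, rfl⟩
    · exact Or.inl h
    · right; simp
    · right; simp
  · intro p hp q hq hpq
    right
    simp only [Finset.mem_insert, Finset.mem_singleton] at hp hq
    rw [SimpleGraph.edge_adj]
    rcases hp with rfl | rfl <;> rcases hq with rfl | rfl <;> simp_all
  · -- the edge `uv` is obtained by contracting into `u` a component `Q` of the other side, which is
    -- adjacent to both `u` and `v` since neither vertex alone separates
    rintro E hEn hE hEcl ⟨b, hbU, hbT, hbE⟩ hK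
    obtain ⟨Q, hQZ, hbQ, hQ, hQcl⟩ := exists_component H {z | z ∈ U ∧ z ∉ ({u, v} : Finset V)}
      (w := b) ⟨hbU, hbT⟩
    have hQE : ∀ z ∈ Q, z ∉ E := by
      have := hQ.2 Eᶜ ⟨b, hbQ, hbE⟩ (fun p hp hpE q hq hpq hqE =>
        hpE (hEcl q hqE p (hQZ hp).1 (hQZ hp).2 hpq.symm))
      exact this
    -- otherwise `s` alone would separate `Q` from `E`
    have hQadj : ∀ s t, ({s, t} : Finset V) = {u, v} → s ≠ t → ∃ q ∈ Q, H.Adj q t := by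
      intro s t hst hne
      by_contra hcon
      push Not at hcon
      have hsT : s ∈ ({u, v} : Finset V) := by rw [← hst]; simp
      have htT : t ∈ ({u, v} : Finset V) := by rw [← hst]; simp
      obtain ⟨e, he⟩ := hEn
      refine hQE e (hone {s} (by simpa using hTU hsT) (by simpa using hTa s hsT) (by simp) Q
        ⟨b, hbQ⟩ (fun c hc => ⟨(hQZ hc).1, fun h => (hQZ hc).2 ?_⟩) ?_ e (hE e he).1
        fun h => (hE e he).2 ?_) he
      · rw [Finset.mem_singleton.1 h]; exact hsT
      · intro c hc q hqU hqs hcq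
        refine hQcl c hc q ⟨hqU, ?_⟩ hcq
        rw [← hst]
        simp only [Finset.mem_insert, Finset.mem_singleton, not_or]
        refine ⟨by simpa using hqs, ?_⟩
        rintro rfl
        exact hcon c hc hcq
      · rw [Finset.mem_singleton.1 h]; exact hsT
    obtain ⟨q₁, hq₁, hq₁u⟩ := hQadj v u (Finset.pair_comm v u) huv.symm
    obtain ⟨q₂, hq₂, hq₂v⟩ := hQadj u v rfl huv
    refine hI.free (K5In.of_contract (Q := Q) (s := u) ?_ ?_ (fun z hz => Or.inr (hQZ hz).1) ?_ hQ
      ⟨q₁, hq₁, hq₁u.symm⟩ ?_ ?_ hK)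
    · refine Set.insert_subset_insert ?_
      rintro z (hz | hz)
      exacts [(hE z hz).1, hTU hz]
    · right; right; simp
    · rw [Set.disjoint_left]
      rintro z hz (rfl | hzE | hzT)
      · exact hI.apex (hQZ hz).1
      · exact hQE z hz hzE
      · exact (hQZ hz).2 hzT
    · intro p _ q _ hpu hqu h
      rcases hadj p q h with h | ⟨h, -⟩ | ⟨-, h⟩
      exacts [h, absurd h hpu, absurd h hqu]
    · intro w _ h
      rcases hadj u w h with h | ⟨-, rfl⟩ | ⟨h, -⟩
      exacts [Or.inl h, Or.inr ⟨q₂, hq₂, hq₂v⟩, absurd h huv]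

/-- Thomassen's reduction. Let `v` be an uncoloured neighbour of `a` having, among the neighbours
of `a`, `q ≤ 1` uncoloured neighbours and `p` precoloured ones, with `p + q ≤ 2`. Reserve `q + 1`
colours of `v` different from those of its precoloured neighbours, remove them from the lists of
the neighbours of `v` that are not adjacent to `a`, contract `v` into `a`, colour the rest, and
finally give `v` a reserved colour. -/
theorem sol_of_contract {H : SimpleGraph V} {a v : V} {U : Finset V} {L : V → Finset ℕ}
    {X : Finset V} {ψ : V → ℕ} (hIH : SolvableBelow V U.card) (hI : Inst H a U L X ψ)
    (hvU : v ∈ U) (hvX : v ∉ X) (hav : H.Adj a v) {Y P : Finset V}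
    (hY : ∀ w ∈ U, w ∉ X → H.Adj a w → H.Adj v w → w ∈ Y)
    (hP : ∀ w ∈ X, H.Adj v w → w ∈ P)
    (hY1 : Y.card ≤ 1) (hPY : P.card + Y.card ≤ 2) : ∃ φ, Sol H U L X ψ φ := by
  classical
  have h3 := hI.three v hvU hvX hav
  have hva : v ≠ a := hav.ne'
  obtain ⟨R, hRs, hRc⟩ : ∃ R ⊆ L v \ P.image ψ, R.card = Y.card + 1 := by
    apply Finset.exists_subset_card_eq
    have := Finset.le_card_sdiff (P.image ψ) (L v)
    have := Finset.card_image_le (s := P) (f := ψ)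
    omega
  let H' : SimpleGraph V := H ⊔ SimpleGraph.fromRel fun p w => p = a ∧ H.Adj v w
  have hHH' : ∀ p q, H.Adj p q → H'.Adj p q := fun p q h => Or.inl h
  have hH'a : ∀ w, H'.Adj a w → H.Adj a w ∨ H.Adj v w := by
    rintro w (h | h)
    · exact Or.inl h
    · rw [SimpleGraph.fromRel_adj] at h
      rcases h.2 with h' | h'
      · exact Or.inr h'.2
      · exact absurd h'.1.symm h.1
  have hH'v : ∀ w, w ≠ a → H.Adj v w → H'.Adj a w := by
    intro w hwa h
    right
    rw [SimpleGraph.fromRel_adj]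
    exact ⟨hwa.symm, Or.inl ⟨rfl, h⟩⟩
  have hne : ∀ w ∈ U, w ≠ a := by
    rintro w hw rfl; exact hI.apex hw
  let L' : V → Finset ℕ := fun w => if H.Adj v w ∧ ¬ H.Adj a w then L w \ R else L w
  have hXv : ∀ w ∈ X, w ≠ v := by rintro w hw rfl; exact hvX hw
  obtain ⟨φ, f1, f2, f3⟩ := hIH H' a (U.erase v) L' X ψ (Finset.card_erase_lt_of_mem hvU)
    { apex := fun h => hI.apex (Finset.mem_of_mem_erase h)
      free := by
        intro hK
        refine hI.free (K5In.of_contract (Q := {v}) (s := a) ?_ (by simp) ?_ ?_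
          (Conn.singleton _ _) ⟨v, rfl, hav⟩ ?_ ?_ hK)
        · exact Set.insert_subset_insert (fun z hz => Finset.mem_of_mem_erase hz)
        · rintro z rfl; exact Or.inr hvU
        · rw [Set.disjoint_singleton_left]
          rintro (h | h)
          · exact hva h
          · simp at h
        · rintro p - q - hp hq (h | h)
          · exact h
          · rw [SimpleGraph.fromRel_adj] at h
            rcases h.2 with h | h
            exacts [absurd h.1 hp, absurd h.1 hq]
        · intro w _ h
          rcases hH'a w h with h | h
          exacts [Or.inl h, Or.inr ⟨v, rfl, h⟩]
      sub := fun x hx => Finset.mem_erase.2 ⟨hXv x hx, hI.sub hx⟩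
      adj := fun x hx => hHH' _ _ (hI.adj x hx)
      card := hI.card
      clique := fun x hx y hy hxy => ⟨hHH' _ _ (hI.clique x hx y hy hxy).1,
        (hI.clique x hx y hy hxy).2⟩
      three := by
        intro w hw hwX haw
        have hwU := Finset.mem_of_mem_erase hw
        simp only [L']
        by_cases hc : H.Adj a w
        · rw [if_neg (by tauto)]
          exact hI.three w hwU hwX hc
        · rw [if_pos ⟨(hH'a w haw).resolve_left hc, hc⟩]
          have := hI.five w hwU hwX hc
          have := Finset.le_card_sdiff R (L w)
          omega
      five := by
        intro w hw hwX haw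
        have hwU := Finset.mem_of_mem_erase hw
        simp only [L']
        rw [if_neg fun h => haw (hH'v w (hne w hwU) h.1)]
        exact hI.five w hwU hwX fun h => haw (hHH' _ _ h) }
  obtain ⟨c, hcR, hcY⟩ : ∃ c ∈ R, c ∉ Y.image φ := by
    apply Finset.exists_mem_notMem_of_card_lt_card
    have := Finset.card_image_le (s := Y) (f := φ)
    omega
  have hcL := Finset.mem_sdiff.1 (hRs hcR)
  have hprop : ∀ w ∈ U, H.Adj v w → φ w ≠ c := by
    intro w hw hvw hwc
    have hwU' : w ∈ U.erase v := Finset.mem_erase.2 ⟨hvw.ne', hw⟩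
    by_cases hwX : w ∈ X
    · rw [f2 w hwX] at hwc
      exact hcL.2 (Finset.mem_image.2 ⟨w, hP w hwX hvw, hwc⟩)
    · by_cases haw : H.Adj a w
      · exact hcY (Finset.mem_image.2 ⟨w, hY w hw hwX haw hvw, hwc⟩)
      · have := f1 w hwU' hwX
        simp only [L'] at this
        rw [if_pos ⟨hvw, haw⟩, hwc] at this
        exact (Finset.mem_sdiff.1 this).2 hcR
  refine ⟨Function.update φ v c, ?_, ?_, ?_⟩
  · intro w hw hwX
    by_cases hwv : w = v
    · rw [hwv, Function.update_self]; exact hcL.1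
    · rw [Function.update_of_ne hwv]
      have := f1 w (Finset.mem_erase.2 ⟨hwv, hw⟩) hwX
      simp only [L'] at this
      split_ifs at this
      · exact (Finset.mem_sdiff.1 this).1
      · exact this
  · intro x hx
    rw [Function.update_of_ne (hXv x hx)]
    exact f2 x hx
  · intro p hp q hq hpq
    by_cases hpv : p = v
    · subst hpv
      rw [Function.update_self, Function.update_of_ne hpq.ne']
      exact (hprop q hq hpq).symm
    · by_cases hqv : q = v
      · subst hqv
        rw [Function.update_self, Function.update_of_ne hpv]
        exact hprop p hp hpq.symm
      · rw [Function.update_of_ne hpv, Function.update_of_ne hqv]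
        exact f3 p (Finset.mem_erase.2 ⟨hpv, hp⟩) q (Finset.mem_erase.2 ⟨hqv, hq⟩) (hHH' _ _ hpq)

/-! ### The induction -/

/-- The inductive step when something is precoloured. In a counterexample the neighbourhood of `a`
is a chordless cycle, and an uncoloured vertex next to a precoloured one on it can be contracted
into `a` by `sol_of_contract`. -/
theorem sol_of_nonempty {H : SimpleGraph V} {a : V} {U : Finset V} {L : V → Finset ℕ}
    {X : Finset V} {ψ : V → ℕ} (hIH : SolvableBelow V U.card) (hI : Inst H a U L X ψ)
    (hX : X.Nonempty) : ∃ φ, Sol H U L X ψ φ := by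
  classical
  obtain ⟨x, hx⟩ := hX
  by_cases hall : ∀ w ∈ U, H.Adj a w → w ∈ X
  · exact sol_of_subset hIH hI.free hI.sub hI.card hI.clique
      (fun v hv hvX => hI.five v hv hvX fun h => hvX (hall v hv h)) hx
  push Not at hall
  obtain ⟨w₀, hw₀U, hw₀a, hw₀X⟩ := hall
  by_contra hno
  have hNC := no_sep hIH hI hno
  let Y : V → Finset V := fun v => U.filter fun w => w ∉ X ∧ H.Adj a w ∧ H.Adj v w
  let P : V → Finset V := fun v => X.filter fun w => H.Adj v w
  have hmY : ∀ v w, w ∈ Y v ↔ w ∈ U ∧ w ∉ X ∧ H.Adj a w ∧ H.Adj v w := fun v w => by simp [Y]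
  have hmP : ∀ v w, w ∈ P v ↔ w ∈ X ∧ H.Adj v w := fun v w => by simp [P]
  have hbad : ∀ v ∈ U, v ∉ X → H.Adj a v → (Y v).card ≤ 1 → 2 < (P v).card + (Y v).card := by
    intro v hv hvX hav h1
    by_contra hle
    exact hno (sol_of_contract hIH hI hv hvX hav
      (fun w hw hwX haw hvw => (hmY v w).2 ⟨hw, hwX, haw, hvw⟩)
      (fun w hw hvw => (hmP v w).2 ⟨hw, hvw⟩) h1 (not_lt.1 hle))
  have hPX : ∀ v, (P v).card ≤ 2 := fun v => (Finset.card_filter_le _ _).trans hI.card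
  obtain ⟨f, n, hf, hfU, hfa⟩ : ∃ f n, IsCyc H f n ∧ (∀ k, f k ∈ U) ∧ ∀ k, H.Adj a (f k) := by
    by_cases hp : ∃ v ∈ U, H.Adj a v ∧ (P v).card = 2
    · -- two precoloured neighbours of `v` span a triangle with `v`
      obtain ⟨v, hvU, hva, hv2⟩ := hp
      obtain ⟨y, z, hyz, hPyz⟩ := Finset.card_eq_two.1 hv2
      have hy : y ∈ X ∧ H.Adj v y := (hmP v y).1 (by rw [hPyz]; simp)
      have hz : z ∈ X ∧ H.Adj v z := (hmP v z).1 (by rw [hPyz]; simp)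
      have hadj := (hI.clique y hy.1 z hz.1 hyz).1
      have hmem : ∀ w ∈ ({v, y, z} : Finset V), w ∈ U ∧ H.Adj a w := by
        intro w hw
        simp only [Finset.mem_insert, Finset.mem_singleton] at hw
        rcases hw with rfl | rfl | rfl
        exacts [⟨hvU, hva⟩, ⟨hI.sub hy.1, hI.adj _ hy.1⟩, ⟨hI.sub hz.1, hI.adj _ hz.1⟩]
      obtain ⟨f, n, hf, hfS⟩ := exists_cyc H {v, y, z} ⟨v, by simp⟩ (by
        intro w hw u
        simp only [Finset.mem_insert, Finset.mem_singleton] at hw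
        rcases hw with rfl | rfl | rfl
        · by_cases hu : y = u
          · exact ⟨z, by simp, hz.2, by rw [← hu]; exact hyz.symm⟩
          · exact ⟨y, by simp, hy.2, hu⟩
        · by_cases hu : v = u
          · exact ⟨z, by simp, hadj, by rw [← hu]; exact hz.2.ne'⟩
          · exact ⟨v, by simp, hy.2.symm, hu⟩
        · by_cases hu : v = u
          · exact ⟨y, by simp, hadj.symm, by rw [← hu]; exact hy.2.ne'⟩
          · exact ⟨v, by simp, hz.2.symm, hu⟩)
      exact ⟨f, n, hf, fun k => (hmem _ (hfS k)).1, fun k => (hmem _ (hfS k)).2⟩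
    · -- otherwise the uncoloured neighbours of `a` span a graph of minimum degree two
      push Not at hp
      let S : Finset V := U.filter fun w => w ∉ X ∧ H.Adj a w
      have hmS : ∀ w, w ∈ S ↔ w ∈ U ∧ w ∉ X ∧ H.Adj a w := fun w => by simp [S]
      obtain ⟨f, n, hf, hfS⟩ := exists_cyc H S ⟨w₀, (hmS _).2 ⟨hw₀U, hw₀X, hw₀a⟩⟩ (by
        intro v hv u
        rw [hmS] at hv
        have h1 := hPX v
        have h2 := hp v hv.1 hv.2.2
        have h3 := hbad v hv.1 hv.2.1 hv.2.2
        obtain ⟨w, hw, hwu⟩ := Finset.exists_mem_ne (show 1 < (Y v).card by omega) u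
        rw [hmY] at hw
        exact ⟨w, (hmS w).2 ⟨hw.1, hw.2.1, hw.2.2.1⟩, hw.2.2.2, hwu⟩)
      exact ⟨f, n, hf, fun k => ((hmS _).1 (hfS k)).1, fun k => ((hmS _).1 (hfS k)).2.2⟩
  -- the cycle is all of the neighbourhood of `a` and is chordless, so a vertex next to a
  -- precoloured one on it meets the requirements of `sol_of_contract`
  have hfin : ∀ g : ℕ → V, IsCyc H g n → (∀ k, g k ∈ U) → (∀ k, H.Adj a (g k)) → g 0 ∉ X →
      (g 1 ∈ X ∨ g (n - 1) ∈ X) → False := by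
    intro g hg hgU hga h0 h1
    have hlast : H.Adj (g 0) (g (n - 1)) := by
      have h1 := hg.adj (n - 1)
      have h2 := hg.per 0
      rw [show n - 1 + 1 = 0 + n by have := hg.three_le; omega, h2] at h1
      exact h1.symm
    have hnb : ∀ w ∈ U, H.Adj a w → H.Adj (g 0) w → w ∈ ({g 1, g (n - 1)} : Finset V) := by
      intro w hwU hwa hgw
      obtain ⟨k, rfl⟩ := hg.covers hI.apex hI.free hNC hgU hga hwU hwa
      simpa using hg.chordless hI.apex hI.free hNC hgU hga hgw
    have hdis : Disjoint (P (g 0)) (Y (g 0)) := by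
      rw [Finset.disjoint_left]
      intro w hw hw'
      exact ((hmY _ _).1 hw').2.1 ((hmP _ _).1 hw).1
    have hsub : P (g 0) ∪ Y (g 0) ⊆ {g 1, g (n - 1)} := by
      intro w hw
      rcases Finset.mem_union.1 hw with hw | hw
      · rw [hmP] at hw
        exact hnb w (hI.sub hw.1) (hI.adj w hw.1) hw.2
      · rw [hmY] at hw
        exact hnb w hw.1 hw.2.2.1 hw.2.2.2
    have hPn : 0 < (P (g 0)).card := by
      rw [Finset.card_pos]
      rcases h1 with h1 | h1
      · exact ⟨_, (hmP _ _).2 ⟨h1, hg.adj 0⟩⟩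
      · exact ⟨_, (hmP _ _).2 ⟨h1, hlast⟩⟩
    have hle := (Finset.card_le_card hsub).trans Finset.card_le_two
    rw [Finset.card_union_of_disjoint hdis] at hle
    have := hbad (g 0) (hgU 0) h0 (hga 0) (by omega)
    omega
  obtain ⟨m, hm⟩ := hf.covers hI.apex hI.free hNC hfU hfa (hI.sub hx) (hI.adj x hx)
  have hn := hf.three_le
  have hg := hf.rotate m
  set g : ℕ → V := fun k => f (k + m) with hgdef
  have hg0 : g 0 = x := by simp [hgdef, hm]
  have hgn : g n = x := by have := hg.per 0; rwa [zero_add, hg0] at this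
  -- `x = g 0` has an uncoloured neighbour on the cycle: otherwise `X` has three elements
  by_cases h1 : g 1 ∈ X
  · by_cases h2 : g (n - 1) ∈ X
    · have h01 : g 0 ≠ g 1 := fun h => by have := hg.inj 0 (by omega) 1 (by omega) h; omega
      have h0n : g 0 ≠ g (n - 1) := fun h => by
        have := hg.inj 0 (by omega) (n - 1) (by omega) h; omega
      have h1n : g 1 ≠ g (n - 1) := fun h => by
        have := hg.inj 1 (by omega) (n - 1) (by omega) h; omega
      have : ({g 0, g 1, g (n - 1)} : Finset V) ⊆ X := by
        intro w hw
        simp only [Finset.mem_insert, Finset.mem_singleton] at hw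
        rcases hw with rfl | rfl | rfl
        · rw [hg0]; exact hx
        · exact h1
        · exact h2
      have := (Finset.card_le_card this).trans hI.card
      rw [Finset.card_eq_three.2 ⟨_, _, _, h01, h0n, h1n, rfl⟩] at this
      omega
    · refine hfin (fun k => g (k + (n - 1))) (hg.rotate _) (fun k => hfU _) (fun k => hfa _)
        (by simpa only [zero_add] using h2) (Or.inl ?_)
      rw [show 1 + (n - 1) = n by omega, hgn]
      exact hx
  · refine hfin (fun k => g (k + 1)) (hg.rotate 1) (fun k => hfU _) (fun k => hfa _)
      (by simpa only [zero_add] using h1) (Or.inr ?_)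
    rw [show n - 1 + 1 = n by omega, hgn]
    exact hx

/-- Every instance has a solution. An instance without precoloured vertices is reduced to one with
a single precoloured vertex. -/
theorem solvableBelow (V : Type*) (n : ℕ) : SolvableBelow V n := by
  classical
  induction n with
  | zero => intro H a U L X ψ h; omega
  | succ n ih =>
    intro H a U L X ψ hU hI
    have hIH : SolvableBelow V U.card := fun H' a' U' L' X' ψ' h => ih H' a' U' L' X' ψ' (by omega)
    rcases X.eq_empty_or_nonempty with rfl | hX
    swap
    · exact sol_of_nonempty hIH hI hX
    -- with nothing precoloured, precolour one vertex, chosen next to `a` if possible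
    have hpre : ∀ w ∈ U, ∀ c ∈ L w, (∃ φ, Sol H U L {w} (fun _ => c) φ) →
        ∃ φ, Sol H U L ∅ ψ φ := by
      rintro w - c hc ⟨φ, h1, h2, h3⟩
      refine ⟨φ, fun v hv _ => ?_, by simp, h3⟩
      by_cases hvw : v = w
      · rw [hvw, h2 w (by simp)]; exact hc
      · exact h1 v hv (by simpa using hvw)
    have hcl : ∀ w c, ∀ x ∈ ({w} : Finset V), ∀ y ∈ ({w} : Finset V), x ≠ y →
        H.Adj x y ∧ (fun _ : V => (c : ℕ)) x ≠ (fun _ => c) y := by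
      intro w c x hx y hy hxy
      rw [Finset.mem_singleton] at hx hy
      exact absurd (hx.trans hy.symm) hxy
    by_cases hN : ∃ w ∈ U, H.Adj a w
    · obtain ⟨w, hw, haw⟩ := hN
      have := hI.three w hw (by simp) haw
      obtain ⟨c, hc⟩ := Finset.card_pos.1 (show 0 < (L w).card by omega)
      refine hpre w hw c hc (sol_of_nonempty (a := a) hIH ?_ ⟨w, by simp⟩)
      exact
        { apex := hI.apex
          free := hI.free
          sub := by simpa using hw
          adj := by simpa using haw
          card := by simp
          clique := hcl w c
          three := fun v hv _ => hI.three v hv (by simp)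
          five := fun v hv _ => hI.five v hv (by simp) }
    · push Not at hN
      rcases U.eq_empty_or_nonempty with rfl | ⟨w, hw⟩
      · exact ⟨ψ, by simp [Sol]⟩
      have := hI.five w hw (by simp) (hN w hw)
      obtain ⟨c, hc⟩ := Finset.card_pos.1 (show 0 < (L w).card by omega)
      exact hpre w hw c hc (sol_of_subset hIH hI.free (by simpa using hw) (by simp) (hcl w c)
        (fun v hv _ => hI.five v hv (by simp) (hN v hv)) (Finset.mem_singleton_self w))

end Choosability

/-- Škrekovski: every K₅-minor-free graph is 5-list colorable. -/
theorem stmt_1 {V : Type*} [Fintype V] (G : SimpleGraph V) (hG : K5MinorFree G)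
    (L : V → Finset ℕ) (hL : ∀ v, (L v).card = 5) :
    ∃ φ : V → ℕ, IsListColoring G L φ := by
  classical
  rcases isEmpty_or_nonempty V with hV | ⟨⟨a⟩⟩
  · exact ⟨fun _ => 0, fun v => hV.elim v, fun v => hV.elim v⟩
  obtain ⟨c, hc⟩ := Finset.card_pos.1 (show 0 < (L a).card by rw [hL]; omega)
  have hfree : ∀ D, ¬ K5In G D := fun D h => hG h.hasMinor
  obtain ⟨φ, h1, h2, h3⟩ := sol_of_subset (H := G) (a := a) (x := a) (U := Finset.univ) (L := L)
    (X := {a}) (ψ := fun _ => c) (fun H a U L X ψ => solvableBelow V _ H a U L X ψ) (hfree _)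
    (Finset.subset_univ _) (by simp)
    (fun x hx y hy hxy =>
      absurd ((Finset.mem_singleton.1 hx).trans (Finset.mem_singleton.1 hy).symm) hxy)
    (fun v _ _ => (hL v).ge) (Finset.mem_singleton_self a)
  refine ⟨φ, fun v => ?_, fun u v => h3 u (Finset.mem_univ u) v (Finset.mem_univ v)⟩
  by_cases hva : v = a
  · rw [hva, h2 a (Finset.mem_singleton_self a)]
    exact hc
  · exact h1 v (Finset.mem_univ v) (by simpa using hva)
end

section
/- If G is a 2-connected outerplanar bipartite graph and f(v) = min{d(v), 4} for all vertices v, then G is f-list colorable. -/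
/-!
A longest cycle of `G` is Hamiltonian: a connected set off the cycle is attached, by
`2`-connectivity, to two vertices of it (`IsCyc.exists_attached`). If these are consecutive the cycle
can be lengthened (`IsCyc.extend`), otherwise there is a `K₂,₃`-minor (`IsCyc.hasMinor_K23`). Two
crossing chords would give a `K₄`-minor (`IsCyc.noncross`). So `G` is a cycle `0, 1, …, n - 1`
together with noncrossing chords, and its bounded faces form a tree.

The colouring is found by induction on `n` (`OuterCycle.listColorable`). If there are no chords, `G`
is an even cycle with lists of size at least two. Otherwise some chord `a b` cuts off a leaf face and
has an end of degree at most four (`OuterCycle.exists_leaf`): in a face all of whose neighbours but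
one are leaves, every vertex off the edge shared with the remaining neighbour has at most two
neighbours on the face and at most one further neighbour on each side. Since `G` is bipartite, the
ear bounding the leaf face has an even number of inner vertices, all with lists of size at least two,
and such an ear extends every pair of distinct colours of `a`, `b` except at most one pair `(α, β)`
(`pathExt_even`). Delete the ear, which lowers the degrees of `a` and `b`, and remove `α` from the
list of `a`, or `β` from that of `b`, whichever has degree at most four: the hypothesis on list sizes
survives, and the colouring of the smaller graph extends to the ear.
-/

open SimpleGraph

/-! ### Colouring a path between two precoloured vertices -/

/-- The path `0, 1, …, k + 1` has a proper colouring whose ends receive the colours `s` and `t`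
and whose inner vertices `1, …, k` are coloured from the lists `M 1, …, M k`. -/
def PathExt (M : ℕ → Finset ℕ) (k s t : ℕ) : Prop :=
  ∃ φ : ℕ → ℕ, φ 0 = s ∧ φ (k + 1) = t ∧ (∀ i, 1 ≤ i → i ≤ k → φ i ∈ M i) ∧
    ∀ i, i ≤ k → φ i ≠ φ (i + 1)

lemma PathExt.succ {M : ℕ → Finset ℕ} {k s t u : ℕ} (h : PathExt M k s u)
    (hu : u ∈ M (k + 1)) (hut : u ≠ t) : PathExt M (k + 1) s t := by
  obtain ⟨φ, h0, h1, h2, h3⟩ := h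
  refine ⟨fun i => if i = k + 2 then t else φ i, by simp [h0], by simp, ?_, ?_⟩
  · intro i hi hik
    have : i ≠ k + 2 := by omega
    simp only [this, if_false]
    rcases Nat.lt_or_ge k i with h | h
    · have : i = k + 1 := by omega
      subst this; rw [h1]; exact hu
    · exact h2 i hi h
  · intro i hi
    have : i ≠ k + 2 := by omega
    simp only [this, if_false]
    by_cases h : i = k + 1
    · subst h; simp [h1, hut]
    · have : i + 1 ≠ k + 2 := by omega
      simp only [this, if_false]
      exact h3 i (by omega)

lemma exists_mem_avoid {A : Finset ℕ} (hA : 2 ≤ A.card) {x y : ℕ} (h : A ≠ {x, y}) :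
    ∃ u ∈ A, u ≠ x ∧ u ≠ y := by
  by_contra! hc
  apply h
  apply Finset.eq_of_subset_of_card_le
  · intro u hu
    have := hc u hu
    simp only [Finset.mem_insert, Finset.mem_singleton]
    tauto
  · exact Finset.card_le_two.trans hA

lemma exists_mem_ne' {A : Finset ℕ} (hA : 2 ≤ A.card) (x : ℕ) : ∃ u ∈ A, u ≠ x := by
  obtain ⟨u, hu, h, -⟩ := exists_mem_avoid (x := x) (y := x) hA (by rintro rfl; simp at hA)
  exact ⟨u, hu, h⟩

/-- With lists of size two on the inner vertices, forcing the colours along the path shows that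
all but at most one pair of end colours extends, unless all the lists equal `{c, d}`; in that case
the failing pairs are the two dictated by parity. -/
lemma pathExt_dichotomy (M : ℕ → Finset ℕ) (k : ℕ) (hk : 1 ≤ k)
    (hM : ∀ i, 1 ≤ i → i ≤ k → 2 ≤ (M i).card) :
    (∃ α β, ∀ s t, (s ≠ α ∨ t ≠ β) → PathExt M k s t) ∨
    (∃ c d c' d', c ≠ d ∧ (Even k → c' = c ∧ d' = d) ∧ (¬ Even k → c' = d ∧ d' = c) ∧
      ∀ s t, ¬ ((s = c ∧ t = c') ∨ (s = d ∧ t = d')) → PathExt M k s t) := by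
  induction k, hk using Nat.le_induction with
  | base =>
    have key : ∀ s t, M 1 ≠ {s, t} → PathExt M 1 s t := by
      intro s t h
      obtain ⟨u, hu, h1, h2⟩ := exists_mem_avoid (hM 1 le_rfl le_rfl) h
      refine PathExt.succ (k := 0) (u := u) ⟨fun i => if i = 0 then s else u, by simp, by simp,
        by intros; omega, ?_⟩ hu h2
      intro i hi
      obtain rfl : i = 0 := by omega
      simpa using h1.symm
    by_cases h : (M 1).card = 2
    · obtain ⟨c, d, hcd, hM1⟩ := Finset.card_eq_two.1 h
      right
      refine ⟨c, d, d, c, hcd, by simp, by simp, fun s t hst => key s t ?_⟩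
      rw [hM1]
      intro he
      apply hst
      have hc : c ∈ ({s, t} : Finset ℕ) := he ▸ (by simp)
      have hd : d ∈ ({s, t} : Finset ℕ) := he ▸ (by simp)
      simp only [Finset.mem_insert, Finset.mem_singleton] at hc hd
      omega
    · left
      refine ⟨0, 0, fun s t _ => key s t ?_⟩
      intro he
      have h1 := hM 1 le_rfl le_rfl
      have h2 : (M 1).card ≤ 2 := he ▸ Finset.card_le_two
      omega
  | succ k hk ih =>
    have hA := hM (k + 1) (by omega) le_rfl
    set A := M (k + 1) with hAdef
    rcases ih (fun i h1 h2 => hM i h1 (by omega)) with ⟨α, β, h⟩ | ⟨c, d, c', d', hcd, he, ho, h⟩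
    · left
      -- Only `s = α` can fail, and then only for the colour `t` with `A = {β, t}`.
      by_cases hex : ∃ t, A = {β, t}
      · obtain ⟨t₀, ht₀⟩ := hex
        refine ⟨α, t₀, fun s t hst => ?_⟩
        by_cases hs : s = α
        · have ht : A ≠ {β, t} := by
            intro h'
            have h1 : t ∈ ({β, t₀} : Finset ℕ) := by rw [← ht₀, h']; simp
            have h2 : t₀ ∈ ({β, t} : Finset ℕ) := by rw [← h', ht₀]; simp
            simp only [Finset.mem_insert, Finset.mem_singleton] at h1 h2
            have : t ≠ t₀ := by tauto
            omega
          obtain ⟨u, hu, h1, h2⟩ := exists_mem_avoid hA ht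
          exact (h s u (Or.inr h1)).succ hu h2
        · obtain ⟨u, hu, h1⟩ := exists_mem_ne' hA t
          exact (h s u (Or.inl hs)).succ hu h1
      · refine ⟨0, 0, fun s t _ => ?_⟩
        obtain ⟨u, hu, h1, h2⟩ := exists_mem_avoid (x := β) (y := t) hA (fun h => hex ⟨t, h⟩)
        exact (h s u (Or.inr h1)).succ hu h2
    · have hcd' : c' ≠ d' := by
        by_cases hev : Even k
        · obtain ⟨rfl, rfl⟩ := he hev; exact hcd
        · obtain ⟨rfl, rfl⟩ := ho hev; exact hcd.symm
      have hc : ∀ t, A ≠ {c', t} → PathExt M (k + 1) c t := by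
        intro t ht
        obtain ⟨u, hu, h1, h2⟩ := exists_mem_avoid hA ht
        exact (h c u (by tauto)).succ hu h2
      have hd : ∀ t, A ≠ {d', t} → PathExt M (k + 1) d t := by
        intro t ht
        obtain ⟨u, hu, h1, h2⟩ := exists_mem_avoid hA ht
        exact (h d u (by tauto)).succ hu h2
      have hr : ∀ s t, s ≠ c → s ≠ d → PathExt M (k + 1) s t := by
        intro s t h1 h2
        obtain ⟨u, hu, h3⟩ := exists_mem_ne' hA t
        exact (h s u (by tauto)).succ hu h3
      have pair : ∀ x y z : ℕ, ({x, y} : Finset ℕ) = {x, z} → y = z := by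
        intro x y z hxyz
        have h1 : y ∈ ({x, z} : Finset ℕ) := hxyz ▸ (by simp)
        have h2 : z ∈ ({x, y} : Finset ℕ) := hxyz ▸ (by simp)
        simp only [Finset.mem_insert, Finset.mem_singleton] at h1 h2
        omega
      by_cases hAe : A = {c', d'}
      · right
        refine ⟨c, d, d', c', hcd, ?_, ?_, ?_⟩
        · intro hev
          have : ¬ Even k := by simpa [Nat.even_add_one] using hev
          have := ho this; tauto
        · intro hev
          have : Even k := by simpa [Nat.even_add_one] using hev
          have := he this; tauto
        · intro s t hst
          by_cases h1 : s = c
          · subst h1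
            exact hc t fun h' => hst (Or.inl ⟨rfl, (pair c' _ _ (h'.symm.trans hAe))⟩)
          by_cases h2 : s = d
          · subst h2
            refine hd t fun h' => hst (Or.inr ⟨rfl, (pair d' _ _ (h'.symm.trans ?_))⟩)
            rw [hAe, Finset.pair_comm]
          exact hr s t h1 h2
      · left
        by_cases h1 : ∃ t₀, A = {c', t₀}
        · obtain ⟨t₀, ht₀⟩ := h1
          refine ⟨c, t₀, fun s t hst => ?_⟩
          by_cases h1 : s = c
          · subst h1
            refine hc t fun h' => ?_
            have := pair c' _ _ (h'.symm.trans ht₀)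
            tauto
          by_cases h2 : s = d
          · subst h2
            refine hd t fun h' => hAe ?_
            have h3 : d' ∈ ({c', t₀} : Finset ℕ) := by rw [← ht₀, h']; simp
            simp only [Finset.mem_insert, Finset.mem_singleton] at h3
            rw [ht₀, ← h3.resolve_left hcd'.symm]
          exact hr s t h1 h2
        · by_cases h2 : ∃ t₀, A = {d', t₀}
          · obtain ⟨t₀, ht₀⟩ := h2
            refine ⟨d, t₀, fun s t hst => ?_⟩
            by_cases h3 : s = d
            · subst h3
              refine hd t fun h' => ?_
              have := pair d' _ _ (h'.symm.trans ht₀)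
              tauto
            by_cases h4 : s = c
            · subst h4
              exact hc t fun h' => h1 ⟨t, h'⟩
            exact hr s t h4 h3
          · refine ⟨0, 0, fun s t _ => ?_⟩
            by_cases h3 : s = d
            · subst h3
              exact hd t fun h' => h2 ⟨t, h'⟩
            by_cases h4 : s = c
            · subst h4
              exact hc t fun h' => h1 ⟨t, h'⟩
            exact hr s t h4 h3

/-- An ear with an even number of inner vertices imposes at most one forbidden pair on the distinct
colours of its ends. -/
lemma pathExt_even (M : ℕ → Finset ℕ) (k : ℕ) (hk : 1 ≤ k) (hev : Even k)
    (hM : ∀ i, 1 ≤ i → i ≤ k → 2 ≤ (M i).card) :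
    ∃ α β, ∀ s t, s ≠ t → (s ≠ α ∨ t ≠ β) → PathExt M k s t := by
  rcases pathExt_dichotomy M k hk hM with ⟨α, β, h⟩ | ⟨c, d, c', d', hcd, he, -, h⟩
  · exact ⟨α, β, fun s t _ => h s t⟩
  · obtain ⟨rfl, rfl⟩ := he hev
    refine ⟨0, 0, fun s t hst _ => h s t ?_⟩
    rintro (⟨rfl, rfl⟩ | ⟨rfl, rfl⟩) <;> exact hst rfl

/-! ### Noncrossing graphs on a Hamiltonian cycle -/

open Classical in
/-- The degree of `i` in the subgraph of `G` induced on `{0, …, n - 1}`. -/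
noncomputable def degBelow (G : SimpleGraph ℕ) (n i : ℕ) : ℕ :=
  ((Finset.range n).filter (G.Adj i)).card

/-- `G`, restricted to `{0, …, n - 1}`, contains the cycle `0, 1, …, n - 1`, and no two of its
edges cross when this cycle is drawn as a circle. -/
structure OuterCycle (G : SimpleGraph ℕ) (n : ℕ) : Prop where
  step : ∀ i, i + 1 < n → G.Adj i (i + 1)
  close : G.Adj 0 (n - 1)
  noncross : ∀ a b c d, a < b → b < c → c < d → d < n → G.Adj a c → G.Adj b d → False

/-- A proper colouring alternates along the Hamiltonian cycle, so an edge joins indices of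
different parity. -/
lemma OuterCycle.parity {G : SimpleGraph ℕ} {n : ℕ} (h : OuterCycle G n) (col : G.Coloring Bool)
    {a b : ℕ} (hb : b < n) (hadj : G.Adj a b) (hab : a < b) : Even (b - a - 1) := by
  have key : ∀ m, a + m < n → (col (a + m) = col a ↔ Even m) := by
    intro m
    induction m with
    | zero => simp
    | succ m ih =>
      intro hm
      have h1 := ih (by omega)
      have h2 := col.valid (h.step (a + m) (by omega))
      rw [Nat.even_add_one, ← h1, ← add_assoc]
      revert h2
      cases col (a + m) <;> cases col (a + m + 1) <;> cases col a <;> simp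
  have h1 := key (b - a) (by omega)
  rw [show a + (b - a) = b by omega] at h1
  have h2 := col.valid hadj
  have h3 : ¬ Even (b - a) := fun h => h2 (h1.2 h).symm
  rw [show b - a = (b - a - 1) + 1 by omega, Nat.even_add_one, not_not] at h3
  exact h3

lemma two_le_degBelow {G : SimpleGraph ℕ} {n i x y : ℕ} (hx : x < n) (hy : y < n) (hxy : x ≠ y)
    (h1 : G.Adj i x) (h2 : G.Adj i y) : 2 ≤ degBelow G n i := by
  classical
  rw [degBelow, ← Finset.card_pair hxy]
  apply Finset.card_le_card
  intro z hz
  simp only [Finset.mem_insert, Finset.mem_singleton] at hz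
  rcases hz with rfl | rfl <;> simp [*]

lemma OuterCycle.two_le_degBelow {G : SimpleGraph ℕ} {n : ℕ} (h : OuterCycle G n) (hn : 3 ≤ n)
    {i : ℕ} (hi : i < n) : 2 ≤ degBelow G n i := by
  by_cases h0 : i = 0
  · subst h0
    exact _root_.two_le_degBelow (x := 1) (y := n - 1) (by omega) (by omega) (by omega)
      (h.step 0 (by omega)) h.close
  have hp : G.Adj i (i - 1) := by
    have := h.step (i - 1) (by omega)
    rw [show i - 1 + 1 = i by omega] at this
    exact this.symm
  by_cases h1 : i = n - 1
  · subst h1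
    exact _root_.two_le_degBelow (x := 0) (y := n - 1 - 1) (by omega) (by omega) (by omega)
      h.close.symm hp
  · exact _root_.two_le_degBelow (x := i + 1) (y := i - 1) (by omega) (by omega) (by omega)
      (h.step i (by omega)) hp

/-- In the weak dual tree, take a face all of whose neighbours but one are leaves: each of its
vertices off the edge towards the remaining neighbour has degree at most four, and one of these
vertices is an end of a chord `a b` cutting off a leaf. Here `i j` is that remaining edge, found as
an edge of least span that encloses another chord. -/
lemma OuterCycle.exists_leaf {G : SimpleGraph ℕ} {n : ℕ} (h : OuterCycle G n)
    (hch : ∃ a b, a + 2 ≤ b ∧ b < n ∧ G.Adj a b ∧ b - a < n - 1) :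
    ∃ a b, a + 2 ≤ b ∧ b < n ∧ G.Adj a b ∧ b - a < n - 1 ∧
      (∀ x y, a ≤ x → x + 2 ≤ y → y ≤ b → G.Adj x y → x = a ∧ y = b) ∧
      (degBelow G n a ≤ 4 ∨ degBelow G n b ≤ 4) := by
  classical
  have hex : ∃ s, ∃ i j, j < n ∧ j - i = s ∧ G.Adj i j ∧
      ∃ a b, i ≤ a ∧ b ≤ j ∧ a + 2 ≤ b ∧ b - a < j - i ∧ G.Adj a b := by
    obtain ⟨a, b, h1, h2, h3, h4⟩ := hch
    exact ⟨_, 0, n - 1, by omega, rfl, h.close, a, b, by omega, by omega, h1, by omega, h3⟩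
  obtain ⟨i, j, hj, hs, hij, a, b, hia, hbj, hab, hlt, hadj⟩ := Nat.find_spec hex
  have hmin : ∀ i' j', j' - i' < j - i → j' < n → G.Adj i' j' →
      ∀ a b, i' ≤ a → b ≤ j' → a + 2 ≤ b → G.Adj a b → a = i' ∧ b = j' := by
    intro i' j' hlt' hj' hij' a b h1 h2 h3 h4
    by_contra hne
    exact Nat.find_min hex (m := j' - i') (by omega)
      ⟨i', j', hj', rfl, hij', a, b, h1, h2, h3, by omega, h4⟩
  have hdeg : ∀ v, i < v → v < j → degBelow G n v ≤ 4 := by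
    intro v hiv hvj
    set R := (Finset.range n).filter (fun w => v + 2 ≤ w ∧ G.Adj v w)
    set Lf := (Finset.range n).filter (fun w => w + 2 ≤ v ∧ G.Adj v w)
    have hR : R.card ≤ 1 := by
      have : ∀ w₁ ∈ R, ∀ w₂ ∈ R, ¬ w₁ < w₂ := by
        intro w₁ hw₁ w₂ hw₂ hl
        simp only [R, Finset.mem_filter, Finset.mem_range] at hw₁ hw₂
        have hw : w₂ ≤ j := by
          by_contra hc
          exact h.noncross i v j w₂ hiv hvj (by omega) hw₂.1 hij hw₂.2.2
        have := hmin v w₂ (by omega) hw₂.1 hw₂.2.2 v w₁ le_rfl hl.le hw₁.2.1 hw₁.2.2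
        omega
      rw [Finset.card_le_one]
      intro x hx y hy
      have h1 := this x hx y hy
      have h2 := this y hy x hx
      omega
    have hL : Lf.card ≤ 1 := by
      have : ∀ w₁ ∈ Lf, ∀ w₂ ∈ Lf, ¬ w₁ < w₂ := by
        intro w₁ hw₁ w₂ hw₂ hl
        simp only [Lf, Finset.mem_filter, Finset.mem_range] at hw₁ hw₂
        have hw : i ≤ w₁ := by
          by_contra hc
          exact h.noncross w₁ i v j (by omega) hiv hvj hj hw₁.2.2.symm hij
        have := hmin w₁ v (by omega) (by omega) hw₁.2.2.symm w₂ v hl.le le_rfl hw₂.2.1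
          hw₂.2.2.symm
        omega
      rw [Finset.card_le_one]
      intro x hx y hy
      have h1 := this x hx y hy
      have h2 := this y hy x hx
      omega
    have hsub : (Finset.range n).filter (G.Adj v) ⊆ ({v - 1, v + 1} : Finset ℕ) ∪ (R ∪ Lf) := by
      intro w hw
      simp only [Finset.mem_filter, Finset.mem_range] at hw
      have hne := hw.2.ne
      simp only [R, Lf, Finset.mem_union, Finset.mem_insert, Finset.mem_singleton,
        Finset.mem_filter, Finset.mem_range]
      by_cases h1 : v + 2 ≤ w
      · tauto
      by_cases h2 : w + 2 ≤ v
      · tauto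
      left; omega
    have h1 := Finset.card_le_card hsub
    have h2 := Finset.card_union_le ({v - 1, v + 1} : Finset ℕ) (R ∪ Lf)
    have h3 := Finset.card_union_le R Lf
    have h4 : ({v - 1, v + 1} : Finset ℕ).card ≤ 2 := Finset.card_le_two
    unfold degBelow
    omega
  refine ⟨a, b, hab, by omega, hadj, by omega, ?_, ?_⟩
  · intro x y hx hxy hy hadj'
    exact hmin a b hlt (by omega) hadj x y hx hy hxy hadj'
  · by_cases hai : a = i
    · right; exact hdeg b (by omega) (by omega)
    · left; exact hdeg a (by omega) (by omega)

lemma degBelow_comap_le {G : SimpleGraph ℕ} {n n' : ℕ} {σ : ℕ → ℕ} (hσ : StrictMono σ)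
    (hn : ∀ m, m < n' → σ m < n) (m : ℕ) :
    degBelow (G.comap σ) n' m ≤ degBelow G n (σ m) := by
  classical
  unfold degBelow
  apply Finset.card_le_card_of_injOn σ _ hσ.injective.injOn
  intro x hx
  simp only [Finset.coe_filter, Finset.mem_range, Set.mem_ofPred_eq, comap_adj] at hx ⊢
  exact ⟨hn x hx.1, hx.2⟩

lemma degBelow_comap_lt {G : SimpleGraph ℕ} {n n' : ℕ} {σ : ℕ → ℕ} (hσ : StrictMono σ)
    (hn : ∀ m, m < n' → σ m < n) (m w : ℕ) (hw : w < n) (hadj : G.Adj (σ m) w)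
    (hne : ∀ x, σ x ≠ w) :
    degBelow (G.comap σ) n' m + 1 ≤ degBelow G n (σ m) := by
  classical
  unfold degBelow
  rw [← Finset.card_image_of_injective _ hσ.injective, Nat.add_one_le_iff]
  apply Finset.card_lt_card
  refine Finset.ssubset_iff_subset_ne.2 ⟨?_, ?_⟩
  · intro x hx
    simp only [Finset.mem_image, Finset.mem_filter, Finset.mem_range, comap_adj] at hx ⊢
    obtain ⟨y, hy, rfl⟩ := hx
    exact ⟨hn y hy.1, hy.2⟩
  · intro he
    have : w ∈ (Finset.range n).filter (G.Adj (σ m)) := by simp [hw, hadj]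
    rw [← he] at this
    obtain ⟨y, -, hy⟩ := Finset.mem_image.1 this
    exact hne y hy

/-- Induction on `n`, deleting the inner vertices of a leaf ear `a, a + 1, …, b`. The ear forbids a
single pair `(α, β)` of colours on `(a, b)`; if, say, `a` has degree at most four, removing `α` from
its list is paid for by the loss of the neighbour `a + 1`. -/
lemma OuterCycle.listColorable (n : ℕ) : ∀ (G : SimpleGraph ℕ), OuterCycle G n → 3 ≤ n →
    G.Coloring Bool → ∀ L : ℕ → Finset ℕ, (∀ i, i < n → min (degBelow G n i) 4 ≤ (L i).card) →
    ∃ φ : ℕ → ℕ, (∀ i, i < n → φ i ∈ L i) ∧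
      ∀ i j, i < j → j < n → G.Adj i j → φ i ≠ φ j := by
  induction n using Nat.strong_induction_on with
  | _ n ih =>
  intro G h hn col L hL
  have hL2 : ∀ i, i < n → 2 ≤ (L i).card := by
    intro i hi
    have h1 := hL i hi
    have h2 := h.two_le_degBelow hn hi
    omega
  by_cases hch : ∃ a b, a + 2 ≤ b ∧ b < n ∧ G.Adj a b ∧ b - a < n - 1
  swap
  · -- Without chords the graph is an even cycle.
    obtain ⟨α, β, hE⟩ := pathExt_even L (n - 2) (by omega)
      (by
        have he := h.parity col (by omega) h.close (by omega)
        rwa [show n - 1 - 0 - 1 = n - 2 by omega] at he)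
      (fun i _ hi => hL2 i (by omega))
    obtain ⟨s, hs, hsα⟩ := exists_mem_ne' (hL2 0 (by omega)) α
    obtain ⟨t, ht, hts⟩ := exists_mem_ne' (hL2 (n - 1) (by omega)) s
    obtain ⟨φ, h0, h1, h2, h3⟩ := hE s t hts.symm (Or.inl hsα)
    rw [show n - 2 + 1 = n - 1 by omega] at h1
    refine ⟨φ, ?_, ?_⟩
    · intro i hi
      by_cases hi0 : i = 0
      · subst hi0; rwa [h0]
      by_cases hi1 : i = n - 1
      · subst hi1; rwa [h1]
      exact h2 i (by omega) (by omega)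
    · intro i j hij hj hadj
      by_cases hj1 : j = i + 1
      · subst hj1; exact h3 i (by omega)
      · by_cases hw : j - i < n - 1
        · exact absurd ⟨i, j, by omega, hj, hadj, hw⟩ hch
        · obtain rfl : i = 0 := by omega
          obtain rfl : j = n - 1 := by omega
          rw [h0, h1]; exact hts.symm
  obtain ⟨a, b, hab, hb, hadj, hlt, hleaf, hdeg⟩ := h.exists_leaf hch
  set k := b - a - 1 with hk
  obtain ⟨α, β, hE⟩ := pathExt_even (fun i => L (a + i)) k (by omega)
    (h.parity col hb hadj (by omega)) (fun i _ hi => hL2 _ (by omega))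
  set σ : ℕ → ℕ := fun m => if m ≤ a then m else m + k with hσdef
  have σle : ∀ m, m ≤ a → σ m = m := fun m hm => by simp [hσdef, hm]
  have σgt : ∀ m, a < m → σ m = m + k := fun m hm => by simp [hσdef, Nat.not_le.2 hm]
  have hσcase : ∀ m, (m ≤ a ∧ σ m = m) ∨ (a < m ∧ σ m = m + k) := fun m =>
    (Nat.lt_or_ge a m).elim (fun h => Or.inr ⟨h, σgt m h⟩) (fun h => Or.inl ⟨h, σle m h⟩)
  have hσ : StrictMono σ := by
    intro x y hxy
    have h1 := hσcase x
    have h2 := hσcase y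
    omega
  have hσb : σ (a + 1) = b := by rw [σgt _ (by omega)]; omega
  have hσa : σ a = a := σle a le_rfl
  have hσn : ∀ m, m < n - k → σ m < n := by
    intro m hm
    have h1 := hσcase m
    omega
  have hout : ∀ x w, a < w → w < b → σ x ≠ w := by
    intro x w h1 h2
    have h3 := hσcase x
    omega
  have h' : OuterCycle (G.comap σ) (n - k) := by
    refine ⟨?_, ?_, ?_⟩
    · intro i hi
      rw [comap_adj]
      rcases lt_trichotomy i a with hi' | rfl | hi'
      · rw [σle i hi'.le, σle (i + 1) hi']; exact h.step i (by omega)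
      · rw [hσa, hσb]; exact hadj
      · rw [σgt i hi', σgt (i + 1) (by omega), show i + 1 + k = i + k + 1 by omega]
        exact h.step _ (by omega)
    · rw [comap_adj, σle 0 (by omega), σgt _ (by omega), show n - k - 1 + k = n - 1 by omega]
      exact h.close
    · intro x y z w h1 h2 h3 h4 h5 h6
      exact h.noncross _ _ _ _ (hσ h1) (hσ h2) (hσ h3) (hσn _ h4) h5 h6
  have hdega := degBelow_comap_lt (n' := n - k) hσ hσn a (a + 1) (by omega)
    (by rw [hσa]; exact h.step a (by omega)) (fun x => hout x _ (by omega) (by omega))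
  have hdegb := degBelow_comap_lt (n' := n - k) hσ hσn (a + 1) (b - 1) (by omega)
    (by
      rw [hσb]
      have := h.step (b - 1) (by omega)
      rw [show b - 1 + 1 = b by omega] at this
      exact this.symm) (fun x => hout x _ (by omega) (by omega))
  rw [hσa] at hdega
  rw [hσb] at hdegb
  have hcol' : (G.comap σ).Coloring Bool := col.comp (SimpleGraph.Hom.comap σ G)
  -- Either end of small degree can absorb the forbidden pair.
  have hsmall : ∃ φ : ℕ → ℕ, (∀ i, i < n - k → φ i ∈ L (σ i)) ∧
      (∀ i j, i < j → j < n - k → (G.comap σ).Adj i j → φ i ≠ φ j) ∧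
      (φ a ≠ α ∨ φ (a + 1) ≠ β) := by
    have hmain : ∀ (v γ : ℕ), v < n - k →
        degBelow (G.comap σ) (n - k) v + 1 ≤ degBelow G n (σ v) → degBelow G n (σ v) ≤ 4 →
        ∃ φ : ℕ → ℕ, (∀ i, i < n - k → φ i ∈ L (σ i)) ∧
          (∀ i j, i < j → j < n - k → (G.comap σ).Adj i j → φ i ≠ φ j) ∧ φ v ≠ γ := by
      intro v γ hv h1 h2
      obtain ⟨φ, hφ1, hφ2⟩ := ih (n - k) (by omega) (G.comap σ) h' (by omega) hcol'
        (fun m => if m = v then (L (σ m)).erase γ else L (σ m)) (by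
          intro m hm
          have h3 := hL (σ m) (hσn m hm)
          split_ifs with hmv
          · subst hmv
            have h4 := Finset.pred_card_le_card_erase (a := γ) (s := L (σ m))
            omega
          · have h4 := degBelow_comap_le (G := G) hσ hσn m
            omega)
      refine ⟨φ, ?_, hφ2, ?_⟩
      · intro i hi
        have h3 := hφ1 i hi
        split_ifs at h3 with hiv
        · exact Finset.mem_of_mem_erase h3
        · exact h3
      · have h3 := hφ1 v hv
        rw [if_pos rfl] at h3
        exact Finset.ne_of_mem_erase h3
    rcases hdeg with hd | hd
    · obtain ⟨φ, h1, h2, h3⟩ := hmain a α (by omega) (by rwa [hσa]) (by rwa [hσa])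
      exact ⟨φ, h1, h2, Or.inl h3⟩
    · obtain ⟨φ, h1, h2, h3⟩ := hmain (a + 1) β (by omega) (by rwa [hσb]) (by rwa [hσb])
      exact ⟨φ, h1, h2, Or.inr h3⟩
  obtain ⟨φ, hφ1, hφ2, hφ3⟩ := hsmall
  have hne : φ a ≠ φ (a + 1) := hφ2 a (a + 1) (by omega) (by omega)
    (by rw [comap_adj, hσa, hσb]; exact hadj)
  obtain ⟨ψ, hψ0, hψ1, hψ2, hψ3⟩ := hE _ _ hne hφ3
  set Φ : ℕ → ℕ := fun v => if v ≤ a then φ v else if v < b then ψ (v - a) else φ (v - k) with hΦ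
  have hΦσ : ∀ m, Φ (σ m) = φ m := by
    intro m
    rcases hσcase m with ⟨h1, h2⟩ | ⟨h1, h2⟩
    · rw [h2]; simp [hΦ, h1]
    · have e1 : ¬ (m + k ≤ a) := by omega
      have e2 : ¬ (m + k < b) := by omega
      rw [h2]; simp [hΦ, e1, e2]
  have hΦψ : ∀ v, a ≤ v → v ≤ b → Φ v = ψ (v - a) := by
    intro v h1 h2
    by_cases e1 : v = a
    · subst e1; simp [hΦ, hψ0]
    by_cases e2 : v = b
    · have := hΦσ (a + 1)
      rw [hσb] at this
      rw [e2, this, ← hψ1]; congr 1; omega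
    have e3 : ¬ (v ≤ a) := by omega
    have e4 : v < b := by omega
    simp [hΦ, e3, e4]
  have hpre : ∀ v, v < n → ¬ (a < v ∧ v < b) → ∃ m, m < n - k ∧ σ m = v := by
    intro v hv h1
    by_cases e : v ≤ a
    · exact ⟨v, by omega, σle v e⟩
    · exact ⟨v - k, by omega, by rw [σgt _ (by omega)]; omega⟩
  refine ⟨Φ, ?_, ?_⟩
  · intro v hv
    by_cases hin : a < v ∧ v < b
    · rw [hΦψ v (by omega) (by omega)]
      have := hψ2 (v - a) (by omega) (by omega)
      dsimp only at this
      rwa [show a + (v - a) = v by omega] at this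
    · obtain ⟨m, hm, rfl⟩ := hpre v hv hin
      rw [hΦσ]; exact hφ1 m hm
  · intro i j hij hj hadj'
    by_cases hin : (a < i ∧ i < b) ∨ (a < j ∧ j < b)
    · -- An inner vertex of the ear has no neighbours besides the adjacent ones on the cycle.
      have hai : a ≤ i := by
        by_contra hc
        exact h.noncross i a j b (by omega) (by omega) (by omega) hb hadj' hadj
      have hjb : j ≤ b := by
        by_contra hc
        exact h.noncross a i b j (by omega) (by omega) (by omega) hj hadj hadj'
      have hj1 : j = i + 1 := by
        by_contra hc
        have := hleaf i j hai (by omega) hjb hadj'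
        omega
      subst hj1
      rw [hΦψ i hai (by omega), hΦψ (i + 1) (by omega) hjb, show i + 1 - a = i - a + 1 by omega]
      exact hψ3 (i - a) (by omega)
    · obtain ⟨m, hm, rfl⟩ := hpre i (by omega) (by tauto)
      obtain ⟨m', hm', rfl⟩ := hpre j hj (by tauto)
      rw [hΦσ, hΦσ]
      exact hφ2 m m' (hσ.lt_iff_lt.1 hij) hm' hadj'

/-! ### A Hamiltonian cycle from the excluded minors -/

/-- `p 0, p 1, …, p (n - 1)` are distinct vertices forming a closed walk in `G`. A single edge
traversed back and forth counts as the case `n = 2`. -/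
structure IsCyc_s2 {V : Type*} (G : SimpleGraph V) (n : ℕ) (p : ℕ → V) : Prop where
  two_le : 2 ≤ n
  inj : ∀ i j, i < j → j < n → p i ≠ p j
  step : ∀ i, i + 1 < n → G.Adj (p i) (p (i + 1))
  close : G.Adj (p (n - 1)) (p 0)

section Cycles

variable {V : Type*} {G : SimpleGraph V} {n : ℕ} {p : ℕ → V}

lemma IsCyc_s2.eq_of_eq (h : IsCyc_s2 G n p) {i j : ℕ} (hi : i < n) (hj : j < n) (he : p i = p j) :
    i = j := by
  rcases lt_trichotomy i j with h1 | h1 | h1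
  · exact absurd he (h.inj i j h1 hj)
  · exact h1
  · exact absurd he.symm (h.inj j i h1 hi)

lemma IsCyc_s2.rotate (h : IsCyc_s2 G n p) {r : ℕ} (hr : r < n) :
    IsCyc_s2 G n (fun i => if i + r < n then p (i + r) else p (i + r - n)) := by
  have hn := h.two_le
  refine ⟨hn, ?_, ?_, ?_⟩
  · intro i j hij hj
    split_ifs with h1 h2 h2
    · exact h.inj _ _ (by omega) h2
    · exact (h.inj _ _ (by omega) h1).symm
    · omega
    · exact h.inj _ _ (by omega) (by omega)
  · intro i hi
    split_ifs with h1 h2 h2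
    · rw [show i + 1 + r = i + r + 1 by omega]; exact h.step _ (by omega)
    · rw [show i + 1 + r - n = 0 by omega, show i + r = n - 1 by omega]; exact h.close
    · omega
    · rw [show i + 1 + r - n = i + r - n + 1 by omega]; exact h.step _ (by omega)
  · rw [if_pos (by omega : 0 + r < n), zero_add]
    split_ifs with h1
    · obtain rfl : r = 0 := by omega
      exact h.close
    · have := h.step (n - 1 + r - n) (by omega)
      rwa [show n - 1 + r - n + 1 = r by omega] at this

/-- The vertices `p a, …, p (b - 1)`. -/
def arc (p : ℕ → V) (a b : ℕ) : Set V := {v | ∃ i, a ≤ i ∧ i < b ∧ p i = v}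

lemma induce_singleton_connected (v : V) : (G.induce ({v} : Set V)).Connected := by
  have : Nonempty ({v} : Set V) := ⟨⟨v, rfl⟩⟩
  exact ⟨Preconnected.of_subsingleton⟩

lemma mem_arc {a b i : ℕ} (h1 : a ≤ i) (h2 : i < b) : p i ∈ arc p a b := ⟨i, h1, h2, rfl⟩

lemma IsCyc_s2.arc_connected (h : IsCyc_s2 G n p) {a b : ℕ} (hab : a < b) (hb : b ≤ n) :
    (G.induce (arc p a b)).Connected := by
  induction b, hab using Nat.le_induction with
  | base =>
    have : arc p a (a + 1) = {p a} := by
      ext v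
      constructor
      · rintro ⟨i, h1, h2, rfl⟩
        obtain rfl : i = a := by omega
        rfl
      · rintro rfl; exact mem_arc le_rfl (by omega)
    rw [Nat.succ_eq_add_one, this]
    exact induce_singleton_connected _
  | succ b hab ih =>
    have : arc p a (b + 1) = arc p a b ∪ {p b} := by
      ext v
      constructor
      · rintro ⟨i, h1, h2, rfl⟩
        by_cases hi : i < b
        · exact Or.inl (mem_arc h1 hi)
        · obtain rfl : i = b := by omega
          exact Or.inr rfl
      · rintro (⟨i, h1, h2, rfl⟩ | rfl)
        · exact mem_arc h1 (by omega)
        · exact mem_arc (by omega) (by omega)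
    rw [this]
    have hadj := h.step (b - 1) (by omega)
    rw [show b - 1 + 1 = b by omega] at hadj
    have hc := ih (by omega)
    have hs := induce_singleton_connected (G := G) (p b)
    exact connected_induce_union hc.preconnected hs.preconnected (mem_arc (by omega) (by omega))
      rfl hadj

lemma IsCyc_s2.arc_disjoint (h : IsCyc_s2 G n p) {a b c d : ℕ} (hbc : b ≤ c) (hd : d ≤ n) :
    Disjoint (arc p a b) (arc p c d) := by
  rw [Set.disjoint_left]
  rintro _ ⟨i, h1, h2, rfl⟩ ⟨j, h3, h4, h5⟩
  exact h.inj i j (by omega) (by omega) h5.symm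

/-- Two crossing chords cut the cycle into four arcs, the branch sets of a `K₄`-minor. -/
lemma IsCyc_s2.noncross (h : IsCyc_s2 G n p) (hK : ¬ HasMinor G (completeGraph (Fin 4)))
    {a b c d : ℕ} (hab : a < b) (hbc : b < c) (hcd : c < d) (hd : d < n)
    (h1 : G.Adj (p a) (p c)) (h2 : G.Adj (p b) (p d)) : False := by
  apply hK
  have e1 : G.Adj (p (b - 1)) (p b) := by
    simpa [show b - 1 + 1 = b by omega] using h.step (b - 1) (by omega)
  have e2 : G.Adj (p (c - 1)) (p c) := by
    simpa [show c - 1 + 1 = c by omega] using h.step (c - 1) (by omega)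
  have e3 : G.Adj (p (d - 1)) (p d) := by
    simpa [show d - 1 + 1 = d by omega] using h.step (d - 1) (by omega)
  have e4 := h.close
  set A := arc p 0 b
  set B := arc p b c
  set C := arc p c d
  set D := arc p d n
  have sym : ∀ {X Y : Set V}, (∃ u ∈ X, ∃ v ∈ Y, G.Adj u v) → ∃ u ∈ Y, ∃ v ∈ X, G.Adj u v := by
    rintro X Y ⟨u, hu, v, hv, huv⟩
    exact ⟨v, hv, u, hu, huv.symm⟩
  have AB : ∃ u ∈ A, ∃ v ∈ B, G.Adj u v :=
    ⟨_, mem_arc (by omega) (by omega), _, mem_arc (by omega) (by omega), e1⟩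
  have BC : ∃ u ∈ B, ∃ v ∈ C, G.Adj u v :=
    ⟨_, mem_arc (by omega) (by omega), _, mem_arc (by omega) (by omega), e2⟩
  have CD : ∃ u ∈ C, ∃ v ∈ D, G.Adj u v :=
    ⟨_, mem_arc (by omega) (by omega), _, mem_arc (by omega) (by omega), e3⟩
  have DA : ∃ u ∈ D, ∃ v ∈ A, G.Adj u v :=
    ⟨_, mem_arc (by omega) (by omega), _, mem_arc (by omega) (by omega), e4⟩
  have AC : ∃ u ∈ A, ∃ v ∈ C, G.Adj u v :=
    ⟨_, mem_arc (by omega) (by omega), _, mem_arc (by omega) (by omega), h1⟩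
  have BD : ∃ u ∈ B, ∃ v ∈ D, G.Adj u v :=
    ⟨_, mem_arc (by omega) (by omega), _, mem_arc (by omega) (by omega), h2⟩
  have cA : (G.induce A).Connected := h.arc_connected (by omega) (by omega)
  have cB : (G.induce B).Connected := h.arc_connected (by omega) (by omega)
  have cC : (G.induce C).Connected := h.arc_connected (by omega) (by omega)
  have cD : (G.induce D).Connected := h.arc_connected (by omega) (by omega)
  have dAB : Disjoint A B := h.arc_disjoint le_rfl (by omega)
  have dAC : Disjoint A C := h.arc_disjoint (by omega) (by omega)
  have dAD : Disjoint A D := h.arc_disjoint (by omega) (by omega)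
  have dBC : Disjoint B C := h.arc_disjoint le_rfl (by omega)
  have dBD : Disjoint B D := h.arc_disjoint (by omega) (by omega)
  have dCD : Disjoint C D := h.arc_disjoint le_rfl (by omega)
  refine ⟨![A, B, C, D], ?_, ?_, ?_, ?_⟩
  · intro i
    fin_cases i
    exacts [⟨p 0, mem_arc (by omega) (by omega)⟩, ⟨p b, mem_arc (by omega) (by omega)⟩,
      ⟨p c, mem_arc (by omega) (by omega)⟩, ⟨p d, mem_arc (by omega) (by omega)⟩]
  · intro i
    fin_cases i
    exacts [cA, cB, cC, cD]
  · intro i j hij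
    fin_cases i <;> fin_cases j <;>
      first
        | exact absurd rfl hij
        | assumption
        | (apply Disjoint.symm; assumption)
  · intro i j hij
    fin_cases i <;> fin_cases j <;>
      first
        | exact absurd rfl hij.ne
        | assumption
        | (apply sym; assumption)

/-- A connected set off the cycle attached to two vertices that are not consecutive on the cycle
gives a `K₂,₃`-minor: the two vertices form one side, the set and the two open arcs between the
vertices form the other. -/
lemma IsCyc_s2.hasMinor_K23 (h : IsCyc_s2 G n p) {K : Set V} (hK : (G.induce K).Connected)
    (hKp : ∀ i, i < n → p i ∉ K) {j : ℕ} (hj : 2 ≤ j) (hjn : j + 2 ≤ n)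
    {u w : V} (hu : u ∈ K) (hw : w ∈ K) (hup : G.Adj (p 0) u) (hwp : G.Adj (p j) w) :
    HasMinor G (completeBipartiteGraph (Fin 2) (Fin 3)) := by
  set X := arc p 0 1
  set Y := arc p j (j + 1)
  set A := arc p 1 j
  set B := arc p (j + 1) n
  have sym : ∀ {X Y : Set V}, (∃ u ∈ X, ∃ v ∈ Y, G.Adj u v) → ∃ u ∈ Y, ∃ v ∈ X, G.Adj u v := by
    rintro X Y ⟨u, hu, v, hv, huv⟩
    exact ⟨v, hv, u, hu, huv.symm⟩
  have e1 : G.Adj (p j) (p (j - 1)) := by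
    have := h.step (j - 1) (by omega)
    rw [show j - 1 + 1 = j by omega] at this
    exact this.symm
  have XK : ∃ u ∈ X, ∃ v ∈ K, G.Adj u v := ⟨p 0, mem_arc (by omega) (by omega), u, hu, hup⟩
  have YK : ∃ u ∈ Y, ∃ v ∈ K, G.Adj u v := ⟨p j, mem_arc (by omega) (by omega), w, hw, hwp⟩
  have XA : ∃ u ∈ X, ∃ v ∈ A, G.Adj u v :=
    ⟨p 0, mem_arc (by omega) (by omega), p 1, mem_arc (by omega) (by omega), h.step 0 (by omega)⟩
  have XB : ∃ u ∈ X, ∃ v ∈ B, G.Adj u v :=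
    ⟨p 0, mem_arc (by omega) (by omega), p (n - 1), mem_arc (by omega) (by omega), h.close.symm⟩
  have YA : ∃ u ∈ Y, ∃ v ∈ A, G.Adj u v :=
    ⟨p j, mem_arc (by omega) (by omega), _, mem_arc (by omega) (by omega), e1⟩
  have YB : ∃ u ∈ Y, ∃ v ∈ B, G.Adj u v :=
    ⟨p j, mem_arc (by omega) (by omega), _, mem_arc (by omega) (by omega), h.step j (by omega)⟩
  have cX : (G.induce X).Connected := h.arc_connected (by omega) (by omega)
  have cY : (G.induce Y).Connected := h.arc_connected (by omega) (by omega)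
  have cA : (G.induce A).Connected := h.arc_connected (by omega) (by omega)
  have cB : (G.induce B).Connected := h.arc_connected (by omega) (by omega)
  have dK : ∀ a b, b ≤ n → Disjoint (arc p a b) K := by
    intro a b hb
    rw [Set.disjoint_left]
    rintro _ ⟨i, h1, h2, rfl⟩
    exact hKp i (by omega)
  have dXK : Disjoint X K := dK _ _ (by omega)
  have dYK : Disjoint Y K := dK _ _ (by omega)
  have dAK : Disjoint A K := dK _ _ (by omega)
  have dBK : Disjoint B K := dK _ _ (by omega)
  have dXY : Disjoint X Y := h.arc_disjoint (by omega) (by omega)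
  have dXA : Disjoint X A := h.arc_disjoint (by omega) (by omega)
  have dXB : Disjoint X B := h.arc_disjoint (by omega) (by omega)
  have dAY : Disjoint A Y := h.arc_disjoint (by omega) (by omega)
  have dYB : Disjoint Y B := h.arc_disjoint (by omega) (by omega)
  have dAB : Disjoint A B := h.arc_disjoint (by omega) (by omega)
  refine ⟨Sum.elim ![X, Y] ![K, A, B], ?_, ?_, ?_, ?_⟩
  · rintro (i | i)
    · fin_cases i
      exacts [⟨p 0, mem_arc (by omega) (by omega)⟩, ⟨p j, mem_arc (by omega) (by omega)⟩]
    · fin_cases i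
      exacts [⟨u, hu⟩, ⟨p 1, mem_arc (by omega) (by omega)⟩,
        ⟨p (n - 1), mem_arc (by omega) (by omega)⟩]
  · rintro (i | i)
    · fin_cases i
      exacts [cX, cY]
    · fin_cases i
      exacts [hK, cA, cB]
  · rintro (i | i) (j | j) hij <;> fin_cases i <;> fin_cases j <;>
      first
        | exact absurd rfl hij
        | assumption
        | (apply Disjoint.symm; assumption)
  · rintro (i | i) (j | j) hij
    · simp at hij
    · fin_cases i <;> fin_cases j <;> assumption
    · fin_cases i <;> fin_cases j <;> (apply sym; assumption)
    · simp at hij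

/-- A connected set off the cycle attached to the consecutive vertices `p (n - 1)` and `p 0` allows
a detour that lengthens the cycle. -/
lemma IsCyc_s2.extend (h : IsCyc_s2 G n p) {K : Set V} (hK : (G.induce K).Connected)
    (hKp : ∀ i, i < n → p i ∉ K)
    {u w : V} (hu : u ∈ K) (hw : w ∈ K) (hup : G.Adj (p 0) u) (hwp : G.Adj (p (n - 1)) w) :
    ∃ n' q, n < n' ∧ IsCyc_s2 G n' q := by
  obtain ⟨P, hP⟩ := (hK.preconnected ⟨w, hw⟩ ⟨u, hu⟩).exists_isPath
  have hn := h.two_le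
  have hinj := hP.getVert_injOn
  refine ⟨n + (P.length + 1), fun i => if i < n then p i else (P.getVert (i - n)).1, by omega,
    by omega, ?_, ?_, ?_⟩
  · intro i j hij hj
    split_ifs with h1 h2 h2
    · exact h.inj i j hij h2
    · intro he
      exact hKp i h1 (he ▸ (P.getVert (j - n)).2)
    · omega
    · intro he
      have := hinj (show i - n ≤ P.length by omega) (show j - n ≤ P.length by omega)
        (Subtype.ext he)
      omega
  · intro i hi
    split_ifs with h1 h2 h2
    · exact h.step i h2
    · rw [show i + 1 - n = 0 by omega, Walk.getVert_zero, show i = n - 1 by omega]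
      exact hwp
    · omega
    · have := P.adj_getVert_succ (i := i - n) (by omega)
      rw [show i + 1 - n = i - n + 1 by omega]
      exact this
  · rw [if_neg (by omega), if_pos (by omega), show n + (P.length + 1) - 1 - n = P.length by omega,
      Walk.getVert_length]
    exact hup.symm

/-- In a `2`-connected graph, a vertex off the cycle lies in a connected set off the cycle that is
attached to two different vertices of the cycle: otherwise at most one vertex separates this set
from the rest of the cycle. -/
lemma IsCyc_s2.exists_attached [Fintype V] (h : IsCyc_s2 G n p) (h2 : KConnected 2 G) {v : V}
    (hv : ∀ i, i < n → p i ≠ v) :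
    ∃ K : Set V, (G.induce K).Connected ∧ (∀ i, i < n → p i ∉ K) ∧
      ∃ i j, i < n ∧ j < n ∧ i ≠ j ∧ (∃ u ∈ K, G.Adj (p i) u) ∧ ∃ w ∈ K, G.Adj (p j) w := by
  classical
  have hfin : {K : Set V | (G.induce K).Connected ∧ (∀ i, i < n → p i ∉ K) ∧ v ∈ K}.Finite :=
    Set.toFinite _
  obtain ⟨K, ⟨hK, hKp, hvK⟩, hmax⟩ := hfin.exists_maximal
    ⟨{v}, induce_singleton_connected v, fun i hi => hv i hi, rfl⟩
  have hn := h.two_le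
  -- By maximality every edge leaving `K` ends on the cycle.
  have hnb : ∀ x ∈ K, ∀ y, y ∉ K → G.Adj x y → ∃ i, i < n ∧ p i = y := by
    intro x hx y hy hxy
    by_contra! hc
    have hKy : (G.induce (K ∪ {y})).Connected :=
      connected_induce_union hK.preconnected (induce_singleton_connected y).preconnected hx rfl hxy
    have := hmax (y := K ∪ {y}) ⟨hKy, by
      rintro i hi (h' | h')
      · exact hKp i hi h'
      · exact hc i hi h', Or.inl hvK⟩ Set.subset_union_left
    exact hy (this (Or.inr rfl))
  -- A connected vertex-deleted subgraph meeting `K` and the cycle has an edge between the two.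
  have hedge : ∀ S : Set V, S.ncard < 2 → v ∉ S → (∃ i, i < n ∧ p i ∉ S) →
      ∃ i, i < n ∧ p i ∉ S ∧ ∃ u ∈ K, G.Adj (p i) u := by
    rintro S hS hvS ⟨i₀, hi₀, hiS⟩
    have hc := h2.2 S hS
    obtain ⟨P⟩ := hc.preconnected ⟨v, hvS⟩ ⟨p i₀, hiS⟩
    obtain ⟨d, -, hd1, hd2⟩ := P.exists_boundary_dart {x | x.1 ∈ K} hvK (hKp i₀ hi₀)
    have hadj : G.Adj d.fst.1 d.snd.1 := d.adj
    obtain ⟨i, hi, hpi⟩ := hnb _ hd1 _ hd2 hadj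
    exact ⟨i, hi, hpi ▸ d.snd.2, d.fst.1, hd1, hpi ▸ hadj.symm⟩
  obtain ⟨i, hi, -, hiu⟩ := hedge ∅ (by simp) (by simp) ⟨0, by omega, by simp⟩
  obtain ⟨j, hj, hji, hju⟩ := hedge {p i} (by simp) (by simpa using (hv i hi).symm) (by
    by_cases hi0 : i = 0
    · exact ⟨1, by omega, fun h' => h.inj 0 1 (by omega) (by omega) (by rw [← hi0]; exact h'.symm)⟩
    · exact ⟨0, by omega, fun h' => h.inj 0 i (by omega) hi h'⟩)
  exact ⟨K, hK, hKp, i, j, hi, hj, fun he => hji (by rw [he]; rfl), hiu, hju⟩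

/-- A longest cycle of a `2`-connected graph without `K₂,₃`-minor is Hamiltonian. -/
lemma exists_hamiltonian [Fintype V] (h2 : KConnected 2 G)
    (hK : ¬ HasMinor G (completeBipartiteGraph (Fin 2) (Fin 3))) :
    ∃ n p, IsCyc_s2 G n p ∧ ∀ v, ∃ i, i < n ∧ p i = v := by
  classical
  have hbound : ∀ n p, IsCyc_s2 G n p → n ≤ Fintype.card V := by
    intro n p h
    have := Fintype.card_le_of_injective (fun i : Fin n => p i)
      (fun i j he => Fin.ext (h.eq_of_eq i.2 j.2 he))
    simpa using this
  have hex : ∃ n p, IsCyc_s2 G n p := by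
    have hc : (G.induce ((∅ : Set V)ᶜ)).Connected := h2.2 ∅ (by simp)
    have hcard := h2.1
    obtain ⟨x, y, hxy⟩ := Fintype.exists_pair_of_one_lt_card (show 1 < Fintype.card V by omega)
    obtain ⟨P⟩ := hc.preconnected ⟨x, by simp⟩ ⟨y, by simp⟩
    obtain ⟨d, -, -, -⟩ := P.exists_boundary_dart {z | z.1 = x} rfl (fun h => hxy h.symm)
    have hadj : G.Adj d.fst.1 d.snd.1 := d.adj
    refine ⟨2, fun i => if i = 0 then d.fst.1 else d.snd.1, le_rfl, ?_, ?_, by simpa using hadj.symm⟩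
    · intro i j hij hj
      obtain rfl : i = 0 := by omega
      obtain rfl : j = 1 := by omega
      simpa using hadj.ne
    · intro i hi
      obtain rfl : i = 0 := by omega
      simpa using hadj
  obtain ⟨n₀, hn₀⟩ := hex
  obtain ⟨p, h⟩ := Nat.findGreatest_spec (P := fun n => ∃ p, IsCyc_s2 G n p) (n := Fintype.card V)
    (hbound n₀ _ hn₀.choose_spec) hn₀
  have hmax : ∀ n' q, IsCyc_s2 G n' q →
      n' ≤ Nat.findGreatest (fun n => ∃ p, IsCyc_s2 G n p) (Fintype.card V) := fun n' q hq =>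
    Nat.le_findGreatest (hbound n' q hq) ⟨q, hq⟩
  set n := Nat.findGreatest (fun n => ∃ p, IsCyc_s2 G n p) (Fintype.card V)
  refine ⟨n, p, h, ?_⟩
  by_contra! hv
  obtain ⟨v, hv⟩ := hv
  obtain ⟨K, hKc, hKp, i, j, hi, hj, hij, ⟨u, hu, hiu⟩, w, hw, hjw⟩ := h.exists_attached h2 hv
  have hn := h.two_le
  -- Rotating the cycle puts `p i` at index `0`, and `p j` at the index `r ≠ 0`.
  set q : ℕ → V := fun m => if m + i < n then p (m + i) else p (m + i - n) with hq
  have hcq : IsCyc_s2 G n q := h.rotate hi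
  have hq0 : q 0 = p i := by simp [hq, hi]
  have hqK : ∀ m, m < n → q m ∉ K := by
    intro m hm
    simp only [hq]
    split_ifs with h1
    · exact hKp _ h1
    · exact hKp _ (by omega)
  obtain ⟨r, hr0, hrn, hqr⟩ : ∃ r, 0 < r ∧ r < n ∧ q r = p j := by
    by_cases hlt : i < j
    · refine ⟨j - i, by omega, by omega, ?_⟩
      simp [hq, show j - i + i = j by omega, hj]
    · refine ⟨j + n - i, by omega, by omega, ?_⟩
      simp [hq, show j + n - i + i = j + n by omega]
  rw [← hq0] at hiu
  rw [← hqr] at hjw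
  by_cases hrl : r = n - 1
  · subst hrl
    obtain ⟨n', q', hlt, hc'⟩ := hcq.extend hKc hqK hu hw hiu hjw
    have := hmax n' q' hc'
    omega
  by_cases hr1 : r = 1
  · subst hr1
    have hc1 := hcq.rotate (r := 1) (by omega)
    obtain ⟨n', q', hlt, hc'⟩ := hc1.extend hKc (by
      intro m hm
      split_ifs with h1
      · exact hqK _ h1
      · exact hqK _ (by omega)) hw hu (by simpa [show 1 < n by omega] using hjw)
      (by simpa [show n - 1 + 1 = n by omega] using hiu)
    have := hmax n' q' hc'
    omega
  exact hK (hcq.hasMinor_K23 hKc hqK (j := r) (by omega) (by omega) hu hw hiu hjw)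

end Cycles

/-- Hutchinson: a 2-connected outerplanar bipartite graph is f-list colorable for
f(v) = min {d(v), 4}. -/
theorem stmt_2 {V : Type*} [Fintype V] (G : SimpleGraph V)
    (h2 : KConnected 2 G) (hop : IsOuterplanar G) (hbip : G.Colorable 2)
    (L : V → Finset ℕ) (hL : ∀ v, (L v).card = min (vdeg G v) 4) :
    ∃ φ : V → ℕ, IsListColoring G L φ := by
  classical
  obtain ⟨n, p, hp, hsurj⟩ := exists_hamiltonian h2 hop.2
  choose idx hidx hpidx using hsurj
  have hn : 3 ≤ n := by
    have h1 := Fintype.card_le_of_injective (fun v => (⟨idx v, hidx v⟩ : Fin n)) (by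
      intro v w he
      rw [← hpidx v, ← hpidx w, Fin.mk.inj_iff.1 he])
    rw [Fintype.card_fin] at h1
    have h3 := h2.1
    omega
  have hcyc : OuterCycle (G.comap p) n := by
    refine ⟨fun i hi => hp.step i hi, hp.close.symm, ?_⟩
    intro a b c d h1 h3 h4 h5 h6 h7
    exact hp.noncross hop.1 h1 h3 h4 h5 h6 h7
  have col : (G.comap p).Coloring Bool :=
    (SimpleGraph.Embedding.completeGraph finTwoEquiv.toEmbedding).toHom.comp
      (hbip.some.comp (SimpleGraph.Hom.comap p G))
  obtain ⟨φ, hφ1, hφ2⟩ := OuterCycle.listColorable n (G.comap p) hcyc hn col (fun i => L (p i)) (by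
    intro i _
    rw [hL]
    have : degBelow (G.comap p) n i ≤ vdeg G (p i) := by
      unfold degBelow vdeg
      rw [← Set.ncard_coe_finset]
      refine Set.ncard_le_ncard_of_injOn p ?_ ?_ (Set.toFinite _)
      · intro j hj
        simp only [Finset.coe_filter, Finset.mem_range, Set.mem_ofPred_eq, comap_adj] at hj
        exact hj.2
      · intro j hj j' hj' he
        simp only [Finset.coe_filter, Finset.mem_range, Set.mem_ofPred_eq] at hj hj'
        exact hp.eq_of_eq hj.1 hj'.1 he
    omega)
  refine ⟨fun v => φ (idx v), fun v => ?_, fun u v huv => ?_⟩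
  · have := hφ1 (idx v) (hidx v)
    rwa [hpidx] at this
  · have hadj : (G.comap p).Adj (idx u) (idx v) := by
      rw [comap_adj, hpidx, hpidx]; exact huv
    rcases lt_or_gt_of_ne hadj.ne with hlt | hlt
    · exact hφ2 _ _ hlt (hidx v) hadj
    · exact (hφ2 _ _ hlt (hidx u) hadj.symm).symm
end
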